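/- Convergence of EPIC. Let T be an n×n symmetric positive definite matrix and P = QᵀTQ; let μ_P > 0 and L_P be the strong convexity parameters of Theorem convexP for this P, κ_P = L_P/μ_P, and 0 < τ_P ≤ κ_P^{−1/2}. Assume ρ_q satisfies λ₁ ≤ ρ_q ≤ λ₁ + (λ₂−λ₁)/(2+χ_P) and the initial vector x₀ ∈ X satisfies 0 ≤ Rq(x₀) − λ₁ ≤ (ρ_q − λ₁)/max{8κ_P, 2κ_P(1+τ_P κ_P)²}, with z₀ = x₀. Generate for k ≥ 0: x̄_k = the M-normalization of x_k/(qᵀMx_k) + τ_P·z_k/(qᵀMz_k); r_k = 2(Ax̄_k − Rq(x̄_k)Mx̄_k); r̃_k = ΠT⁻¹r_k where Π = I − q̃qᵀM/(qᵀMq̃) and q̃ = T⁻¹Mq; z_{k+1} = the M-normalization of (1−τ_P)z_k/(qᵀMz_k) + τ_P·x̄_k/(qᵀMx̄_k) − (τ_P(qᵀMx̄_k)/μ_P)·r̃_k; and x_{k+1} = the minimizer of Rq over X ∩ span{q, x_k, x̄_k, r̃_k}. Then Rq(x_k) ≤ Rq(x_{k−1}) ≤ … ≤ Rq(x₀), and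 Rq(x_k) − λ₁ ≤ 2(1−τ_P)^k (Rq(x₀) − λ₁) for all k ≥ 0. -/

import Mathlib

open Matrix

noncomputable def Mnorm {n : ℕ} (M : Matrix (Fin n) (Fin n) ℝ) (x : Fin n → ℝ) : ℝ :=
  Real.sqrt (x ⬝ᵥ (M *ᵥ x))

noncomputable def Rq {n : ℕ} (A M : Matrix (Fin n) (Fin n) ℝ) (x : Fin n → ℝ) : ℝ :=
  (x ⬝ᵥ (A *ᵥ x)) / (x ⬝ᵥ (M *ᵥ x))

/-- ψ(x) = QᵀMx / (qᵀMx) -/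
noncomputable def psiMap {n m : ℕ} (M : Matrix (Fin n) (Fin n) ℝ) (q : Fin n → ℝ)
    (Q : Matrix (Fin n) (Fin m) ℝ) (x : Fin n → ℝ) : Fin m → ℝ :=
  (q ⬝ᵥ (M *ᵥ x))⁻¹ • ((Qᵀ * M) *ᵥ x)

/-- ψ†(y) = (Qy + q)/‖Qy + q‖_M -/
noncomputable def psiDag {n m : ℕ} (M : Matrix (Fin n) (Fin n) ℝ) (q : Fin n → ℝ)
    (Q : Matrix (Fin n) (Fin m) ℝ) (y : Fin m → ℝ) : Fin n → ℝ :=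
  (Mnorm M (Q *ᵥ y + q))⁻¹ • (Q *ᵥ y + q)

/-- The hemisphere S₊ = {x : ‖x‖_M = 1, qᵀMx > 0}. -/
def Splus {n : ℕ} (M : Matrix (Fin n) (Fin n) ℝ) (q : Fin n → ℝ) : Set (Fin n → ℝ) :=
  {x | Mnorm M x = 1 ∧ 0 < q ⬝ᵥ (M *ᵥ x)}

/-- X = {x ∈ S₊ : Rq(x) ≤ Rq(q)}. -/
def Xset {n : ℕ} (A M : Matrix (Fin n) (Fin n) ℝ) (q : Fin n → ℝ) : Set (Fin n → ℝ) :=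
  {x | x ∈ Splus M q ∧ Rq A M x ≤ Rq A M q}

/-- M-normalization v ↦ v/‖v‖_M. -/
noncomputable def Mnormalize {n : ℕ} (M : Matrix (Fin n) (Fin n) ℝ) (v : Fin n → ℝ) :
    Fin n → ℝ :=
  (Mnorm M v)⁻¹ • v

/-!
In the affine chart `{x | m q x = 1}` the Rayleigh quotient is an ordinary function, with an exact
Taylor remainder
`m y y * (f y - f x - ⟨∇f x, y - x⟩)`
`= a (y - x) (y - x) - f x * m (y - x) (y - x) - (m y y - m x x) * ⟨∇f x, y - x⟩`.
On a small enough sublevel set the last term is dominated by the spectral gap, so `f` is there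
strongly convex and smooth relative to the preconditioner, and EPIC is Nesterov's accelerated
gradient method in this chart. The auxiliary iterates may leave the sublevel set; it is
the decrease of Nesterov's energy that keeps them close enough to the minimizer for the extrapolated
points to stay in the region where the curvature bounds hold.
-/

open LinearMap (BilinForm)

namespace Epic

/-! ### Rayleigh quotients and pencils with a spectral gap -/

section Rayleigh

variable {V : Type*} [AddCommGroup V] [Module ℝ V] {a m : BilinForm ℝ V}

/-- The Rayleigh quotient of a pencil `(a, m)` of bilinear forms; it is `0` where `m x x = 0`. -/
noncomputable def rayleigh (a m : BilinForm ℝ V) (x : V) : ℝ :=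
  a x x / m x x

/-- The derivative of `rayleigh a m` at `x` in the direction `w`, for symmetric `a` and `m`. -/
noncomputable def rayleighDeriv (a m : BilinForm ℝ V) (x w : V) : ℝ :=
  2 / m x x * (a x w - rayleigh a m x * m x w)

theorem apply_self_eq_rayleigh_mul {x : V} (hx : m x x ≠ 0) :
    a x x = rayleigh a m x * m x x :=
  (div_mul_cancel₀ _ hx).symm

theorem rayleigh_smul {c : ℝ} (hc : c ≠ 0) (x : V) : rayleigh a m (c • x) = rayleigh a m x := by
  simp only [rayleigh, map_smul, LinearMap.smul_apply, smul_eq_mul]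
  rw [mul_div_mul_left _ _ hc, mul_div_mul_left _ _ hc]

theorem rayleighDeriv_smul {c : ℝ} (hc : c ≠ 0) (x w : V) :
    rayleighDeriv a m (c • x) w = c⁻¹ * rayleighDeriv a m x w := by
  rw [rayleighDeriv, rayleigh_smul hc, rayleighDeriv]
  simp only [map_smul, LinearMap.smul_apply, smul_eq_mul]
  field_simp

/-- Taylor expansion of the Rayleigh quotient: after multiplication by `m y y` the remainder is
exact, and it is quadratic in `y - x` up to the variation of the denominator. -/
theorem mul_rayleigh_sub_eq (ha : a.IsSymm) (hm : m.IsSymm) {x y : V}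
    (hx : m x x ≠ 0) (hy : m y y ≠ 0) :
    m y y * (rayleigh a m y - rayleigh a m x - rayleighDeriv a m x (y - x)) =
      a (y - x) (y - x) - rayleigh a m x * m (y - x) (y - x) -
        (m y y - m x x) * rayleighDeriv a m x (y - x) := by
  have hax := apply_self_eq_rayleigh_mul (a := a) hx
  have hay := apply_self_eq_rayleigh_mul (a := a) hy
  have hderiv : m x x * rayleighDeriv a m x (y - x) =
      2 * (a x (y - x) - rayleigh a m x * m x (y - x)) := by
    rw [rayleighDeriv]; field_simp
  simp only [map_sub, LinearMap.sub_apply, ha.eq y x, hm.eq y x] at hderiv ⊢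
  linear_combination hax - hay - hderiv

theorem apply_sq_le_of_isSymm {b : BilinForm ℝ V} (hb : b.IsSymm) (hb0 : ∀ x, 0 ≤ b x x)
    (x y : V) : b x y ^ 2 ≤ b x x * b y y :=
  b.apply_sq_le_of_symm hb0 ⟨hb.eq⟩ x y

/-- The residual bound: `Ax - ρMx` is measured in the norm dual to `a`, which is at most
`c⁻¹ ρ (ρ - c) m x x`. Subtracting a multiple of `x` makes `w` orthogonal to `x` for `a`, and then
Cauchy–Schwarz for `m` and for `a - c m` combine. -/
theorem residual_sq_le (ha : a.IsSymm) (hm : m.IsSymm) (hm0 : ∀ x, 0 ≤ m x x) {c ρ : ℝ}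
    (hc : 0 < c) (hcm : ∀ x, c * m x x ≤ a x x) {x : V} (hx : 0 < m x x)
    (hρ : a x x = ρ * m x x) (w : V) :
    c * (a x w - ρ * m x w) ^ 2 ≤ ρ * (ρ - c) * m x x * a w w := by
  have hcρ : c ≤ ρ := le_of_mul_le_mul_right ((hcm x).trans_eq hρ) hx
  have hρ0 : 0 < ρ := hc.trans_le hcρ
  have hax : 0 < a x x := hρ ▸ mul_pos hρ0 hx
  set v := w - (a x w / a x x) • x with hv
  have hxv : a x v = 0 := by simp [hv, hax.ne']
  have hwv : w = v + (a x w / a x x) • x := by simp [hv]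
  have hres : a x w - ρ * m x w = -(ρ * m x v) := by
    have : a x w - ρ * m x w = a x v - ρ * m x v := by
      simp only [hv, map_sub, map_smul, smul_eq_mul, hρ]
      ring
    rw [this, hxv, zero_sub]
  have haw : a v v ≤ a w w := by
    have : a w w = a v v + (a x w / a x x) ^ 2 * a x x := by
      conv_lhs => rw [hwv]
      simp only [map_add, map_smul, LinearMap.add_apply, LinearMap.smul_apply, smul_eq_mul,
        ha.eq v x, hxv]
      ring
    rw [this]
    exact le_add_of_nonneg_right (by positivity)
  have hcs_m := apply_sq_le_of_isSymm hm hm0 x v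
  have hcs_shift : (c * m x v) ^ 2 ≤ (ρ - c) * m x x * (a v v - c * m v v) := by
    have := apply_sq_le_of_isSymm (ha.sub (hm.smul c)) (fun y => by simpa using hcm y) x v
    simpa [hxv, hρ, sub_mul] using this
  have hmv : c * ρ * (m x v) ^ 2 ≤ (ρ - c) * m x x * a v v := by
    linarith [mul_le_mul_of_nonneg_left hcs_m (mul_nonneg (sub_nonneg.2 hcρ) hc.le)]
  calc c * (a x w - ρ * m x w) ^ 2 = ρ * (c * ρ * (m x v) ^ 2) := by rw [hres]; ring
    _ ≤ ρ * ((ρ - c) * m x x * a v v) := by gcongr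
    _ ≤ ρ * ((ρ - c) * m x x * a w w) := by
      have := sub_nonneg.2 hcρ
      gcongr
    _ = ρ * (ρ - c) * m x x * a w w := by ring

end Rayleigh

/-- A pencil `(a, m)` of symmetric forms with a simple smallest eigenvalue `l₁ > 0`, attained at the
`m`-unit eigenvector `u`, whose other eigenvalues lie in `[l₂, Λ]` with `l₂ > l₁`. -/
structure GapPencil {V : Type*} [AddCommGroup V] [Module ℝ V] (a m : BilinForm ℝ V) (u : V)
    (l₁ l₂ Λ : ℝ) : Prop where
  symm_a : a.IsSymm
  symm_m : m.IsSymm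
  nonneg_m : ∀ x, 0 ≤ m x x
  pos : 0 < l₁
  gap : l₁ < l₂
  unit : m u u = 1
  eigen : ∀ x, a u x = l₁ * m u x
  le_of_orthogonal : ∀ w, m u w = 0 → l₂ * m w w ≤ a w w
  le_max : ∀ x, a x x ≤ Λ * m x x

namespace GapPencil

variable {V : Type*} [AddCommGroup V] [Module ℝ V] {a m : BilinForm ℝ V} {u : V} {l₁ l₂ Λ : ℝ}

theorem apply_sq_le (h : GapPencil a m u l₁ l₂ Λ) (x y : V) : m x y ^ 2 ≤ m x x * m y y :=
  apply_sq_le_of_isSymm h.symm_m h.nonneg_m x y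

theorem sub_sq_le (h : GapPencil a m u l₁ l₂ Λ) (x : V) :
    l₂ * m x x - (l₂ - l₁) * m u x ^ 2 ≤ a x x := by
  have hw := h.le_of_orthogonal (x - m u x • u) (by simp [h.unit])
  simp only [map_sub, map_smul, LinearMap.sub_apply, LinearMap.smul_apply, smul_eq_mul, h.unit,
    h.symm_m.eq x u, h.symm_a.eq x u, h.eigen] at hw
  linarith

theorem min_mul_le (h : GapPencil a m u l₁ l₂ Λ) (x : V) : l₁ * m x x ≤ a x x := by
  have hu := h.apply_sq_le u x
  rw [h.unit, one_mul] at hu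
  linarith [h.sub_sq_le x, mul_le_mul_of_nonneg_left hu (sub_nonneg.2 h.gap.le)]

theorem min_le_max (h : GapPencil a m u l₁ l₂ Λ) : l₁ ≤ Λ := by
  simpa [h.eigen, h.unit] using h.le_max u

theorem div_max_mul_le (h : GapPencil a m u l₁ l₂ Λ) {ρ : ℝ} (hρ : l₁ ≤ ρ) (w : V) :
    l₁ / Λ * a w w ≤ ρ * m w w := by
  have hΛ : 0 < Λ := h.pos.trans_le h.min_le_max
  calc l₁ / Λ * a w w ≤ l₁ / Λ * (Λ * m w w) := by
        have := h.pos
        have := h.le_max w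
        gcongr
    _ = l₁ * m w w := by field_simp
    _ ≤ ρ * m w w := mul_le_mul_of_nonneg_right hρ (h.nonneg_m w)

/-- Two-dimensional Cauchy interlacing for the trace: if `q` has Rayleigh quotient `l₁ + δ`, its
`m`-orthogonal complement has Rayleigh quotients at least `l₂ - δ`. -/
theorem sub_mul_le_of_orthogonal (h : GapPencil a m u l₁ l₂ Λ) {q : V} {δ : ℝ} (hq : m q q = 1)
    (haq : a q q = l₁ + δ) {w : V} (hw : m q w = 0) : (l₂ - δ) * m w w ≤ a w w := by
  have hqu : (l₂ - l₁) * (1 - m u q ^ 2) ≤ δ := by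
    have := h.sub_sq_le q
    rw [hq, haq] at this
    linarith
  have huw : m u w ^ 2 ≤ (1 - m u q ^ 2) * m w w := by
    have := h.apply_sq_le (u - m u q • q) w
    simp only [map_sub, map_smul, LinearMap.sub_apply, LinearMap.smul_apply, smul_eq_mul, hw, hq,
      h.unit, h.symm_m.eq q u] at this
    linarith
  linarith [h.sub_sq_le w, mul_le_mul_of_nonneg_left huw (sub_nonneg.2 h.gap.le),
    mul_le_mul_of_nonneg_right hqu (h.nonneg_m w)]

end GapPencil

/-! ### The affine chart -/

section Chart

variable {V : Type*} [AddCommGroup V] [Module ℝ V] {a m : BilinForm ℝ V} {q x y : V}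

theorem apply_sub_eq_zero (hx : m q x = 1) (hy : m q y = 1) : m q (y - x) = 0 := by
  rw [map_sub, hx, hy, sub_self]

/-- The central projection of `x` onto the affine hyperplane `{x | m q x = 1}`; it is `0` where
`m q x = 0`. -/
noncomputable def chart (m : BilinForm ℝ V) (q x : V) : V :=
  (m q x)⁻¹ • x

theorem apply_chart (hx : m q x ≠ 0) : m q (chart m q x) = 1 := by
  rw [chart, map_smul, smul_eq_mul, inv_mul_cancel₀ hx]

theorem apply_smul_chart (hx : m q x ≠ 0) : m q x • chart m q x = x :=
  smul_inv_smul₀ hx x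

theorem chart_smul {c : ℝ} (hc : c ≠ 0) (x : V) : chart m q (c • x) = chart m q x := by
  rw [chart, chart, map_smul, smul_eq_mul, _root_.mul_inv_rev, smul_smul, inv_mul_cancel_right₀ hc]

theorem chart_of_apply_eq_one (hx : m q x = 1) : chart m q x = x := by
  rw [chart, hx, inv_one, one_smul]

theorem rayleigh_chart (hx : m q x ≠ 0) : rayleigh a m (chart m q x) = rayleigh a m x :=
  rayleigh_smul (inv_ne_zero hx) x

/-- Scaling to unit `m`-norm. -/
noncomputable def normalize (m : BilinForm ℝ V) (x : V) : V :=
  (√(m x x))⁻¹ • x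

theorem apply_self_pos_of_apply_ne_zero (hm : m.IsSymm) (hm0 : ∀ x, 0 ≤ m x x) (hx : m q x ≠ 0) :
    0 < m x x := by
  have hpos := (sq_pos_of_ne_zero hx).trans_le (apply_sq_le_of_isSymm hm hm0 q x)
  exact (hm0 x).lt_of_ne fun h0 => by simp [← h0] at hpos

theorem apply_normalize_self (hx : 0 < m x x) : m (normalize m x) (normalize m x) = 1 := by
  rw [normalize, map_smul, LinearMap.map_smul₂, smul_eq_mul, smul_eq_mul, ← mul_assoc, ← mul_inv,
    Real.mul_self_sqrt hx.le, inv_mul_cancel₀ hx.ne']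

theorem inv_sqrt_ne_zero (hx : 0 < m x x) : (√(m x x))⁻¹ ≠ 0 :=
  inv_ne_zero (Real.sqrt_pos.2 hx).ne'

theorem apply_normalize_ne_zero (hx : 0 < m x x) (hqx : m q x ≠ 0) : m q (normalize m x) ≠ 0 := by
  rw [normalize, map_smul]
  exact mul_ne_zero (inv_sqrt_ne_zero hx) hqx

theorem chart_normalize (hx : 0 < m x x) : chart m q (normalize m x) = chart m q x :=
  chart_smul (inv_sqrt_ne_zero hx) x

theorem rayleigh_normalize (hx : 0 < m x x) : rayleigh a m (normalize m x) = rayleigh a m x :=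
  rayleigh_smul (inv_sqrt_ne_zero hx) x

/-- `R` is the gradient, for the inner product `t`, of the Rayleigh quotient restricted to the
affine hyperplane `{x | m q x = 1}`. -/
structure IsChartGradient (a m t : BilinForm ℝ V) (q x R : V) : Prop where
  apply_eq_zero : m q R = 0
  apply_eq : ∀ w, m q w = 0 → t R w = rayleighDeriv a m x w

theorem IsChartGradient.chart {t : BilinForm ℝ V} {R : V} (hR : IsChartGradient a m t q x R)
    (hx : m q x ≠ 0) : IsChartGradient a m t q (chart m q x) (m q x • R) where
  apply_eq_zero := by rw [map_smul, hR.apply_eq_zero, smul_zero]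
  apply_eq w hw := by
    rw [Epic.chart, rayleighDeriv_smul (inv_ne_zero hx), inv_inv, ← hR.apply_eq w hw,
      LinearMap.map_smul₂, smul_eq_mul]

end Chart

theorem sq_mul_le_of_sq_sub_le {g δ c α : ℝ} (hδ : 0 ≤ δ) (hg : 2 * δ < g) (hc : 0 ≤ c)
    (hαc : (g - δ) * c ≤ α) (hsq : (α - δ * c) ^ 2 ≤ 4 * δ * α) :
    (g - 2 * δ) ^ 2 * c ≤ 4 * δ * (g - δ) := by
  have hgδ : 0 < g - δ := by linarith
  have hα : 0 ≤ α := (mul_nonneg hgδ.le hc).trans hαc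
  have hlin : (g - 2 * δ) * α ≤ (g - δ) * (α - δ * c) := by
    linarith [mul_le_mul_of_nonneg_left hαc hδ]
  have hquad : (g - 2 * δ) ^ 2 * α * α ≤ 4 * δ * (g - δ) ^ 2 * α := by
    calc (g - 2 * δ) ^ 2 * α * α = ((g - 2 * δ) * α) ^ 2 := by ring
      _ ≤ ((g - δ) * (α - δ * c)) ^ 2 :=
        pow_le_pow_left₀ (mul_nonneg (by linarith) hα) hlin 2
      _ = (g - δ) ^ 2 * (α - δ * c) ^ 2 := mul_pow _ _ 2
      _ ≤ (g - δ) ^ 2 * (4 * δ * α) := by gcongr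
      _ = 4 * δ * (g - δ) ^ 2 * α := by ring
  rcases hα.eq_or_lt with hα' | hα'
  · have hc' : c = 0 :=
      le_antisymm (nonpos_of_mul_nonpos_right (hαc.trans_eq hα'.symm) hgδ) hc
    rw [hc', mul_zero]
    positivity
  · refine le_of_mul_le_mul_right ?_ hgδ
    calc (g - 2 * δ) ^ 2 * c * (g - δ) = (g - 2 * δ) ^ 2 * ((g - δ) * c) := by ring
      _ ≤ (g - 2 * δ) ^ 2 * α := by gcongr
      _ ≤ 4 * δ * (g - δ) ^ 2 := le_of_mul_le_mul_right hquad hα'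
      _ = 4 * δ * (g - δ) * (g - δ) := by ring

/-- The factor by which the variation of the denominator `m y y` perturbs the curvature of the
Rayleigh quotient on `{x | m q x = 1, rayleigh a m x ≤ l₁ + δ}`, relative to `a`. -/
noncomputable def curvatureError (l₁ l₂ δ : ℝ) : ℝ :=
  8 * δ / l₁ * √((l₂ + l₁) / (2 * (l₂ - l₁)))

/-- A `GapPencil` with an `m`-unit vector `q` of Rayleigh quotient `l₁ + δ`, where `δ` is small
compared with the spectral gap. It is studied in the affine chart `{x | m q x = 1}`. -/
structure AnchoredPencil {V : Type*} [AddCommGroup V] [Module ℝ V] (a m : BilinForm ℝ V) (u : V)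
    (l₁ l₂ Λ : ℝ) (q : V) (δ : ℝ) : Prop extends GapPencil a m u l₁ l₂ Λ where
  unit_q : m q q = 1
  apply_q : a q q = l₁ + δ
  small : 6 * δ ≤ l₂ - l₁

namespace AnchoredPencil

variable {V : Type*} [AddCommGroup V] [Module ℝ V] {a m : BilinForm ℝ V} {u q : V}
  {l₁ l₂ Λ δ : ℝ} {x y : V}

theorem shift_nonneg (h : AnchoredPencil a m u l₁ l₂ Λ q δ) : 0 ≤ δ := by
  have := h.min_mul_le q
  rw [h.unit_q, h.apply_q] at this
  linarith

theorem rayleigh_anchor (h : AnchoredPencil a m u l₁ l₂ Λ q δ) : rayleigh a m q = l₁ + δ := by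
  rw [rayleigh, h.unit_q, h.apply_q, div_one]

theorem apply_min_ne_zero (h : AnchoredPencil a m u l₁ l₂ Λ q δ) : m q u ≠ 0 := by
  intro h0
  have := h.sub_sq_le q
  rw [h.unit_q, h.apply_q, h.symm_m.eq u q, h0] at this
  linarith [h.small, h.gap]

theorem one_le_apply_self (h : AnchoredPencil a m u l₁ l₂ Λ q δ) (hx : m q x = 1) :
    1 ≤ m x x := by
  simpa [hx, h.unit_q] using h.apply_sq_le q x

theorem apply_self_pos (h : AnchoredPencil a m u l₁ l₂ Λ q δ) (hx : m q x = 1) : 0 < m x x :=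
  one_pos.trans_le (h.one_le_apply_self hx)

theorem min_le_rayleigh (h : AnchoredPencil a m u l₁ l₂ Λ q δ) (hx : m q x = 1) :
    l₁ ≤ rayleigh a m x :=
  (le_div_iff₀ (h.apply_self_pos hx)).2 (h.min_mul_le x)

theorem apply_sub_self (h : AnchoredPencil a m u l₁ l₂ Λ q δ) (hx : m q x = 1) :
    m (x - q) (x - q) = m x x - 1 := by
  simp only [map_sub, LinearMap.sub_apply, h.symm_m.eq x q, hx, h.unit_q]
  ring

/-- Points of the sublevel set are close to `q`: with `w = x - q`, the form `a - l₁ m` is bounded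
below by the gap on `w`, while Cauchy–Schwarz for it bounds the cross term `a q w`. -/
theorem sq_mul_apply_sub_le (h : AnchoredPencil a m u l₁ l₂ Λ q δ) (hx : m q x = 1)
    (hfx : rayleigh a m x ≤ l₁ + δ) :
    (l₂ - l₁ - 2 * δ) ^ 2 * (m x x - 1) ≤ 4 * δ * (l₂ - l₁ - δ) := by
  have hδ := h.shift_nonneg
  have hsmall := h.small
  have hgap := h.gap
  have hqw := apply_sub_eq_zero h.unit_q hx
  have hww := h.apply_sub_self hx
  set w := x - q
  have hxw : x = q + w := (add_sub_cancel q x).symm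
  have hlow : (l₂ - l₁ - δ) * (m x x - 1) ≤ a w w - l₁ * (m x x - 1) := by
    rw [← hww]
    linarith [h.sub_mul_le_of_orthogonal h.unit_q h.apply_q hqw]
  have hcross : a w w - l₁ * (m x x - 1) - δ * (m x x - 1) ≤ -2 * a q w := by
    have hax : a x x ≤ (l₁ + δ) * m x x := (div_le_iff₀ (h.apply_self_pos hx)).1 hfx
    have haxq : a x x = l₁ + δ + 2 * a q w + a w w := by
      rw [hxw]
      simp only [map_add, LinearMap.add_apply, h.symm_a.eq w q, h.apply_q]
      ring
    linarith
  have hcs : a q w ^ 2 ≤ δ * (a w w - l₁ * (m x x - 1)) := by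
    have := apply_sq_le_of_isSymm (h.symm_a.sub (h.symm_m.smul l₁))
      (fun y => by simpa using h.min_mul_le y) q w
    simpa [-map_sub, hqw, h.unit_q, h.apply_q, hww] using this
  refine sq_mul_le_of_sq_sub_le hδ (by linarith) (hww ▸ h.nonneg_m w) hlow ?_
  have hnonneg : 0 ≤ a w w - l₁ * (m x x - 1) - δ * (m x x - 1) := by
    have := mul_nonneg (by linarith : 0 ≤ l₂ - l₁ - 2 * δ) (hww ▸ h.nonneg_m w)
    linarith
  calc (a w w - l₁ * (m x x - 1) - δ * (m x x - 1)) ^ 2 ≤ (-2 * a q w) ^ 2 :=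
        pow_le_pow_left₀ hnonneg hcross 2
    _ = 4 * a q w ^ 2 := by ring
    _ ≤ 4 * δ * (a w w - l₁ * (m x x - 1)) := by linarith

theorem mul_apply_self_le_one (h : AnchoredPencil a m u l₁ l₂ Λ q δ) (hx : m q x = 1)
    (hfx : rayleigh a m x ≤ l₁ + δ) : (1 - 4 * δ / (l₂ - l₁)) * m x x ≤ 1 := by
  have hg : 0 < l₂ - l₁ := sub_pos.2 h.gap
  have hD := h.apply_self_pos hx
  have hclose := h.sq_mul_apply_sub_le hx hfx
  have hmul : (l₂ - l₁ - 4 * δ) * m x x ≤ l₂ - l₁ := by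
    refine le_of_mul_le_mul_left ?_ hg
    linarith [mul_nonneg (sq_nonneg δ) hD.le]
  calc (1 - 4 * δ / (l₂ - l₁)) * m x x = (l₂ - l₁ - 4 * δ) * m x x / (l₂ - l₁) := by field_simp
    _ ≤ 1 := (div_le_one hg).2 hmul

theorem apply_self_sub_one_le (h : AnchoredPencil a m u l₁ l₂ Λ q δ) (hx : m q x = 1)
    (hfx : rayleigh a m x ≤ l₁ + δ) : m x x - 1 ≤ 12 * δ / (l₂ - l₁) := by
  have hg : 0 < l₂ - l₁ := sub_pos.2 h.gap
  have hle := h.mul_apply_self_le_one hx hfx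
  have hσ : 4 * δ / (l₂ - l₁) ≤ 2 / 3 := by
    rw [div_le_iff₀ hg]
    linarith [h.small]
  have hδ := h.shift_nonneg
  have hD := h.apply_self_pos hx
  have hD3 : m x x ≤ 3 := by linarith [mul_le_mul_of_nonneg_right hσ hD.le]
  have : 4 * δ / (l₂ - l₁) * m x x ≤ 4 * δ / (l₂ - l₁) * 3 := by gcongr
  calc m x x - 1 ≤ 4 * δ / (l₂ - l₁) * 3 := by linarith
    _ = 12 * δ / (l₂ - l₁) := by ring

theorem apply_self_sub_sq_le (h : AnchoredPencil a m u l₁ l₂ Λ q δ) (hx : m q x = 1)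
    (hy : m q y = 1) (hfx : rayleigh a m x ≤ l₁ + δ) (hfy : rayleigh a m y ≤ l₁ + δ) :
    (m y y - m x x) ^ 2 ≤ 48 * δ / (l₂ - l₁) * m (y - x) (y - x) := by
  have hsum : m ((y - q) + (x - q)) ((y - q) + (x - q)) ≤ 48 * δ / (l₂ - l₁) := by
    have hpar : m ((y - q) + (x - q)) ((y - q) + (x - q)) + m (y - x) (y - x) =
        2 * m (y - q) (y - q) + 2 * m (x - q) (x - q) := by
      rw [← sub_sub_sub_cancel_right y x q]
      simp only [map_add, map_sub _ (y - q), LinearMap.add_apply, LinearMap.sub_apply]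
      ring
    have h48 : 48 * δ / (l₂ - l₁) = 4 * (12 * δ / (l₂ - l₁)) := by ring
    rw [h.apply_sub_self hx, h.apply_sub_self hy] at hpar
    linarith [h.nonneg_m (y - x), h.apply_self_sub_one_le hx hfx, h.apply_self_sub_one_le hy hfy]
  have hdiff : m y y - m x x = m (y - x) ((y - q) + (x - q)) := by
    have := apply_sub_eq_zero hx hy
    simp only [map_sub, map_add, LinearMap.sub_apply, h.symm_m.eq x q, h.symm_m.eq y q,
      h.symm_m.eq x y] at this ⊢
    linarith
  calc (m y y - m x x) ^ 2
      ≤ m (y - x) (y - x) * m ((y - q) + (x - q)) ((y - q) + (x - q)) :=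
        hdiff ▸ h.apply_sq_le _ _
    _ ≤ m (y - x) (y - x) * (48 * δ / (l₂ - l₁)) :=
        mul_le_mul_of_nonneg_left hsum (h.nonneg_m _)
    _ = 48 * δ / (l₂ - l₁) * m (y - x) (y - x) := mul_comm _ _

theorem rayleighDeriv_sq_le (h : AnchoredPencil a m u l₁ l₂ Λ q δ) (hx : m q x = 1)
    (hfx : rayleigh a m x ≤ l₁ + δ / 4) (w : V) :
    rayleighDeriv a m x w ^ 2 ≤ (l₁ + l₂) / 2 * δ / l₁ * a w w := by
  have hD := h.apply_self_pos hx
  have hD1 := h.one_le_apply_self hx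
  have hpos := h.pos
  have hδ := h.shift_nonneg
  have hρ := h.min_le_rayleigh hx
  have haw : 0 ≤ a w w := (mul_nonneg hpos.le (h.nonneg_m w)).trans (h.min_mul_le w)
  have hres := residual_sq_le h.symm_a h.symm_m h.nonneg_m hpos h.min_mul_le hD
    (apply_self_eq_rayleigh_mul hD.ne') w
  set ρ := rayleigh a m x with hρx
  have hfactor : ρ * (ρ - l₁) ≤ (l₁ + l₂) / 2 * (δ / 4) := by
    have hsmall := h.small
    gcongr <;> linarith
  calc rayleighDeriv a m x w ^ 2
      = 4 / (m x x ^ 2 * l₁) * (l₁ * (a x w - ρ * m x w) ^ 2) := by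
        rw [rayleighDeriv, ← hρx]
        field_simp
        ring
    _ ≤ 4 / (m x x ^ 2 * l₁) * (ρ * (ρ - l₁) * m x x * a w w) := by gcongr
    _ = 4 * (ρ * (ρ - l₁)) / l₁ * a w w / m x x := by field_simp
    _ ≤ 4 * (ρ * (ρ - l₁)) / l₁ * a w w := by
        refine div_le_self ?_ hD1
        have := mul_nonneg (hpos.le.trans hρ) (sub_nonneg.2 hρ)
        positivity
    _ ≤ 4 * ((l₁ + l₂) / 2 * (δ / 4)) / l₁ * a w w := by gcongr
    _ = (l₁ + l₂) / 2 * δ / l₁ * a w w := by ring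

theorem abs_mul_rayleighDeriv_le (h : AnchoredPencil a m u l₁ l₂ Λ q δ) (hx : m q x = 1)
    (hy : m q y = 1) (hfx : rayleigh a m x ≤ l₁ + δ / 4) (hfy : rayleigh a m y ≤ l₁ + δ) :
    |(m y y - m x x) * rayleighDeriv a m x (y - x)| ≤
      curvatureError l₁ l₂ δ * a (y - x) (y - x) := by
  have hpos := h.pos
  have hg : 0 < l₂ - l₁ := sub_pos.2 h.gap
  have hδ := h.shift_nonneg
  have hl : 0 < l₁ + l₂ := by linarith
  have haw := h.min_mul_le (y - x)
  have hmw := h.nonneg_m (y - x)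
  have hvar := h.apply_self_sub_sq_le hx hy (by linarith) hfy
  have hder := h.rayleighDeriv_sq_le hx hfx (y - x)
  set w := y - x
  have haw0 : 0 ≤ a w w := (mul_nonneg hpos.le hmw).trans haw
  have herror : curvatureError l₁ l₂ δ ^ 2 = 32 * δ ^ 2 * (l₁ + l₂) / (l₁ ^ 2 * (l₂ - l₁)) := by
    rw [curvatureError, mul_pow, Real.sq_sqrt (by rw [add_comm]; positivity)]
    field_simp
    ring
  refine abs_le_of_sq_le_sq ?_ (mul_nonneg (by rw [curvatureError]; positivity) haw0)
  calc ((m y y - m x x) * rayleighDeriv a m x w) ^ 2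
      = (m y y - m x x) ^ 2 * rayleighDeriv a m x w ^ 2 := mul_pow _ _ 2
    _ ≤ 48 * δ / (l₂ - l₁) * m w w * ((l₁ + l₂) / 2 * δ / l₁ * a w w) := by gcongr
    _ = 24 * δ ^ 2 * (l₁ + l₂) / (l₁ ^ 2 * (l₂ - l₁)) * (l₁ * m w w * a w w) := by
        field_simp
        ring
    _ ≤ 32 * δ ^ 2 * (l₁ + l₂) / (l₁ ^ 2 * (l₂ - l₁)) * (a w w * a w w) := by
        gcongr
        norm_num
    _ = (curvatureError l₁ l₂ δ * a w w) ^ 2 := by rw [mul_pow, herror]; ring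

theorem rayleigh_mul_apply_le (h : AnchoredPencil a m u l₁ l₂ Λ q δ) {w : V} (hw : m q w = 0)
    (hfx : rayleigh a m x ≤ l₁ + δ / 4) :
    rayleigh a m x * m w w ≤ (l₁ / l₂ + 2 * δ / l₂) * a w w := by
  have hpos := h.pos
  have hgap := h.gap
  have hl₂ := hpos.trans hgap
  have hδ := h.shift_nonneg
  have hsmall := h.small
  have hmw := h.nonneg_m w
  have hmul : l₂ * (l₁ + δ / 4) ≤ (l₁ + 2 * δ) * (l₂ - δ) := by
    linarith [mul_nonneg hδ (by linarith : 0 ≤ 7 / 4 * l₂ - l₁ - 2 * δ)]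
  calc rayleigh a m x * m w w ≤ (l₁ + δ / 4) * m w w := by gcongr
    _ = l₂ * (l₁ + δ / 4) * m w w / l₂ := by field_simp
    _ ≤ (l₁ + 2 * δ) * (l₂ - δ) * m w w / l₂ := by gcongr
    _ = (l₁ + 2 * δ) * ((l₂ - δ) * m w w) / l₂ := by rw [mul_assoc]
    _ ≤ (l₁ + 2 * δ) * a w w / l₂ := by
        have := h.sub_mul_le_of_orthogonal h.unit_q h.apply_q hw
        gcongr
    _ = (l₁ / l₂ + 2 * δ / l₂) * a w w := by ring

theorem mul_le_remainder (h : AnchoredPencil a m u l₁ l₂ Λ q δ) (hx : m q x = 1)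
    (hy : m q y = 1) (hfx : rayleigh a m x ≤ l₁ + δ / 4) (hfy : rayleigh a m y ≤ l₁ + δ) :
    (1 - l₁ / l₂ - 2 * δ / l₂ - curvatureError l₁ l₂ δ) * a (y - x) (y - x) ≤
      m y y * (rayleigh a m y - rayleigh a m x - rayleighDeriv a m x (y - x)) := by
  rw [mul_rayleigh_sub_eq h.symm_a h.symm_m (h.apply_self_pos hx).ne' (h.apply_self_pos hy).ne']
  linarith [h.rayleigh_mul_apply_le (apply_sub_eq_zero hx hy) hfx,
    le_of_abs_le (h.abs_mul_rayleighDeriv_le hx hy hfx hfy)]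

theorem remainder_le_mul (h : AnchoredPencil a m u l₁ l₂ Λ q δ) (hx : m q x = 1)
    (hy : m q y = 1) (hfx : rayleigh a m x ≤ l₁ + δ / 4) (hfy : rayleigh a m y ≤ l₁ + δ) :
    m y y * (rayleigh a m y - rayleigh a m x - rayleighDeriv a m x (y - x)) ≤
      (1 - l₁ / Λ + curvatureError l₁ l₂ δ) * a (y - x) (y - x) := by
  rw [mul_rayleigh_sub_eq h.symm_a h.symm_m (h.apply_self_pos hx).ne' (h.apply_self_pos hy).ne']
  linarith [h.div_max_mul_le (h.min_le_rayleigh hx) (y - x),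
    neg_le_of_abs_le (h.abs_mul_rayleighDeriv_le hx hy hfx hfy)]

end AnchoredPencil

/-! ### Nesterov energy -/

section Nesterov

variable {V : Type*} [AddCommGroup V] [Module ℝ V] {t : BilinForm ℝ V} {μ L τ : ℝ}

/-- The Lyapunov function of the accelerated iteration: `φ` is the gap of the objective at the main
iterate, `Z` the auxiliary iterate and `s` the minimizer. -/
noncomputable def energy (t : BilinForm ℝ V) (μ : ℝ) (s : V) (φ : ℝ) (Z : V) : ℝ :=
  φ + μ / 2 * t (Z - s) (Z - s)

/-- One step of Nesterov's method for strongly convex functions, where `R` is the `t`-gradient at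
the extrapolated point `Y` and `φX`, `φY`, `φp`, `0` are the values at `X`, `Y`, the gradient step
from `Y`, and the minimizer `s`. -/
theorem energy_step_le (ht : t.IsSymm) (ht0 : ∀ x, 0 ≤ t x x) (hμ : 0 < μ) (hL : 0 < L)
    (hτ0 : 0 ≤ τ) (hτ1 : τ ≤ 1) (hτL : τ ^ 2 * L ≤ μ) {s X Z Y R : V} {φX φY φp : ℝ}
    (hY : (1 + τ) • Y = X + τ • Z) (hp : φp ≤ φY - 1 / (2 * L) * t R R)
    (hs : φY + t R (s - Y) + μ / 2 * t (s - Y) (s - Y) ≤ 0) (hX : φY + t R (X - Y) ≤ φX) :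
    energy t μ s φp ((1 - τ) • Z + τ • Y - (τ / μ) • R) ≤ (1 - τ) * energy t μ s φX Z := by
  obtain ⟨z, rfl⟩ : ∃ z, Z = s + z := ⟨Z - s, by abel⟩
  obtain ⟨y, rfl⟩ : ∃ y, Y = s + y := ⟨Y - s, by abel⟩
  have hXY : X - (s + y) = τ • y - τ • z := by
    rw [eq_sub_of_add_eq hY.symm]
    module
  have hZ : (1 - τ) • (s + z) + τ • (s + y) - (τ / μ) • R - s =
      (1 - τ) • z + τ • y - (τ / μ) • R := by module
  have hsY : s - (s + y) = -y := by abel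
  rw [hXY] at hX
  rw [hsY] at hs
  simp only [map_sub, map_neg, map_smul, LinearMap.neg_apply, smul_eq_mul, neg_neg] at hs hX
  have hexpand : μ / 2 * t ((1 - τ) • z + τ • y - (τ / μ) • R)
      ((1 - τ) • z + τ • y - (τ / μ) • R) =
      μ / 2 * ((1 - τ) * t z z + τ * t y y) - μ / 2 * (τ * (1 - τ) * t (y - z) (y - z)) -
        τ * ((1 - τ) * t R z + τ * t R y) + τ ^ 2 / (2 * μ) * t R R := by
    simp only [map_add, map_sub, map_smul, LinearMap.add_apply, LinearMap.sub_apply,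
      LinearMap.smul_apply, smul_eq_mul, ht.eq z y, ht.eq z R, ht.eq y R]
    field_simp
    ring
  have hgrad : τ ^ 2 / (2 * μ) * t R R ≤ 1 / (2 * L) * t R R := by
    refine mul_le_mul_of_nonneg_right ?_ (ht0 R)
    rw [div_le_div_iff₀ (by positivity) (by positivity)]
    linarith
  have hcross : 0 ≤ μ / 2 * (τ * (1 - τ) * t (y - z) (y - z)) := by
    have := ht0 (y - z)
    have := sub_nonneg.2 hτ1
    positivity
  rw [energy, energy, hZ, hexpand, add_sub_cancel_left]
  linarith [mul_le_mul_of_nonneg_left hs hτ0, mul_le_mul_of_nonneg_left hX (sub_nonneg.2 hτ1)]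

theorem mul_apply_extrapolation_le_energy (ht : t.IsSymm) (ht0 : ∀ x, 0 ≤ t x x) (hμ : 0 ≤ μ)
    (hτ0 : 0 ≤ τ) (hτ1 : τ ≤ 1) {s X Z Y : V} {φX : ℝ} (hY : (1 + τ) • Y = X + τ • Z)
    (hX : μ / 2 * t (X - s) (X - s) ≤ φX) :
    μ / 2 * t (Y - s) (Y - s) ≤ energy t μ s φX Z := by
  obtain ⟨z, rfl⟩ : ∃ z, Z = s + z := ⟨Z - s, by abel⟩
  obtain ⟨y, rfl⟩ : ∃ y, Y = s + y := ⟨Y - s, by abel⟩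
  have hXs : X - s = (1 + τ) • y - τ • z := by
    rw [eq_sub_of_add_eq hY.symm]
    module
  rw [hXs] at hX
  have hconvex : μ / 2 * ((1 + τ) * t y y) ≤
      μ / 2 * t ((1 + τ) • y - τ • z) ((1 + τ) • y - τ • z) + τ * (μ / 2 * t z z) := by
    have hcross : 0 ≤ μ / 2 * (τ * (1 + τ) * t (y - z) (y - z)) := by
      have := ht0 (y - z)
      positivity
    refine le_of_sub_nonneg (hcross.trans_eq ?_)
    simp only [map_sub, map_smul, LinearMap.sub_apply, LinearMap.smul_apply, smul_eq_mul,
      ht.eq z y]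
    ring
  have hy : 0 ≤ τ * (μ / 2 * t y y) := by
    have := ht0 y
    positivity
  have hz : 0 ≤ (1 - τ) * (μ / 2 * t z z) := by
    have := ht0 z
    have := sub_nonneg.2 hτ1
    positivity
  rw [energy, add_sub_cancel_left, add_sub_cancel_left]
  linarith

end Nesterov

/-- An `AnchoredPencil` together with a preconditioner `t` for which the curvature bounds of the
Rayleigh quotient in the chart `{x | m q x = 1}` become `μ` and `L`. -/
structure PreconditionedPencil {V : Type*} [AddCommGroup V] [Module ℝ V] (a m t : BilinForm ℝ V)
    (u : V) (l₁ l₂ Λ : ℝ) (q : V) (δ μ L : ℝ) : Prop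
    extends AnchoredPencil a m u l₁ l₂ Λ q δ where
  symm_t : t.IsSymm
  nonneg_t : ∀ x, 0 ≤ t x x
  pos_lower : 0 < μ
  lower_le_upper : μ ≤ L
  lower : ∀ w, m q w = 0 → μ / 2 * t w w ≤ (1 - 4 * δ / (l₂ - l₁)) *
    (1 - l₁ / l₂ - 2 * δ / l₂ - curvatureError l₁ l₂ δ) * a w w
  upper : ∀ w, m q w = 0 → (1 - l₁ / Λ + curvatureError l₁ l₂ δ) * a w w ≤ L / 2 * t w w

namespace PreconditionedPencil

variable {V : Type*} [AddCommGroup V] [Module ℝ V] {a m t : BilinForm ℝ V} {u q : V}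
  {l₁ l₂ Λ δ μ L : ℝ} {x y : V}

theorem pos_upper (h : PreconditionedPencil a m t u l₁ l₂ Λ q δ μ L) : 0 < L :=
  h.pos_lower.trans_le h.lower_le_upper

theorem le_one_of_sq_mul_le (h : PreconditionedPencil a m t u l₁ l₂ Λ q δ μ L) {τ : ℝ}
    (hτ : τ ^ 2 * L ≤ μ) : τ ≤ 1 := by
  have := le_of_mul_le_mul_right ((hτ.trans h.lower_le_upper).trans_eq (one_mul L).symm) h.pos_upper
  exact le_of_abs_le ((sq_le_one_iff_abs_le_one τ).1 this)

theorem strongly_convex (h : PreconditionedPencil a m t u l₁ l₂ Λ q δ μ L) (hx : m q x = 1)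
    (hy : m q y = 1) (hfx : rayleigh a m x ≤ l₁ + δ / 4) (hfy : rayleigh a m y ≤ l₁ + δ) :
    μ / 2 * t (y - x) (y - x) ≤
      rayleigh a m y - rayleigh a m x - rayleighDeriv a m x (y - x) := by
  set E := rayleigh a m y - rayleigh a m x - rayleighDeriv a m x (y - x)
  have hσ : 0 < 1 - 4 * δ / (l₂ - l₁) := by
    rw [sub_pos, div_lt_one (sub_pos.2 h.gap)]
    linarith [h.small, h.gap, h.shift_nonneg]
  have hD := h.mul_apply_self_le_one hy hfy
  have hlower : μ / 2 * t (y - x) (y - x) ≤ (1 - 4 * δ / (l₂ - l₁)) * m y y * E := by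
    refine (h.lower _ (apply_sub_eq_zero hx hy)).trans ?_
    rw [mul_assoc, mul_assoc]
    exact mul_le_mul_of_nonneg_left (h.mul_le_remainder hx hy hfx hfy) hσ.le
  have hE0 : 0 ≤ E := by
    have := h.nonneg_t (y - x)
    have := h.pos_lower
    exact nonneg_of_mul_nonneg_right ((by positivity : 0 ≤ μ / 2 * t (y - x) (y - x)).trans hlower)
      (mul_pos hσ (h.apply_self_pos hy))
  exact hlower.trans (mul_le_of_le_one_left hE0 hD)

theorem smooth (h : PreconditionedPencil a m t u l₁ l₂ Λ q δ μ L) (hx : m q x = 1)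
    (hy : m q y = 1) (hfx : rayleigh a m x ≤ l₁ + δ / 4) (hfy : rayleigh a m y ≤ l₁ + δ) :
    rayleigh a m y - rayleigh a m x - rayleighDeriv a m x (y - x) ≤
      L / 2 * t (y - x) (y - x) := by
  have hE0 : 0 ≤ rayleigh a m y - rayleigh a m x - rayleighDeriv a m x (y - x) := by
    have := h.nonneg_t (y - x)
    have := h.pos_lower
    exact le_trans (by positivity) (h.strongly_convex hx hy hfx hfy)
  calc _ ≤ m y y * (rayleigh a m y - rayleigh a m x - rayleighDeriv a m x (y - x)) :=
        le_mul_of_one_le_left hE0 (h.one_le_apply_self hy)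
    _ ≤ _ := h.remainder_le_mul hx hy hfx hfy
    _ ≤ _ := h.upper _ (apply_sub_eq_zero hx hy)

theorem apply_self_sub_le (h : PreconditionedPencil a m t u l₁ l₂ Λ q δ μ L) {w : V}
    (hw : m q w = 0) {ρ : ℝ} (hρ : l₁ ≤ ρ) : a w w - ρ * m w w ≤ L / 2 * t w w := by
  have haw : 0 ≤ a w w := (mul_nonneg h.pos.le (h.nonneg_m w)).trans (h.min_mul_le w)
  have he : 0 ≤ curvatureError l₁ l₂ δ * a w w := by
    have := h.pos
    have := h.shift_nonneg
    exact mul_nonneg (by rw [curvatureError]; positivity) haw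
  linarith [h.upper w hw, h.div_max_mul_le hρ w]

theorem rayleigh_minimizer (h : PreconditionedPencil a m t u l₁ l₂ Λ q δ μ L) :
    rayleigh a m (chart m q u) = l₁ := by
  rw [rayleigh_chart h.apply_min_ne_zero, rayleigh, h.eigen, h.unit, mul_one, div_one]

theorem rayleighDeriv_minimizer (h : PreconditionedPencil a m t u l₁ l₂ Λ q δ μ L) (w : V) :
    rayleighDeriv a m (chart m q u) w = 0 := by
  rw [rayleighDeriv, h.rayleigh_minimizer, chart]
  simp only [LinearMap.map_smul₂, h.eigen, smul_eq_mul, mul_left_comm _ l₁, sub_self, mul_zero]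

theorem strongly_convex_minimizer (h : PreconditionedPencil a m t u l₁ l₂ Λ q δ μ L)
    (hy : m q y = 1) (hfy : rayleigh a m y ≤ l₁ + δ) :
    μ / 2 * t (y - chart m q u) (y - chart m q u) ≤ rayleigh a m y - l₁ := by
  have := h.strongly_convex (apply_chart h.apply_min_ne_zero) hy
    (by linarith [h.rayleigh_minimizer, h.shift_nonneg]) hfy
  rwa [h.rayleighDeriv_minimizer, h.rayleigh_minimizer, sub_zero] at this

theorem rayleigh_sub_le (h : PreconditionedPencil a m t u l₁ l₂ Λ q δ μ L) (hy : m q y = 1) :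
    rayleigh a m y - l₁ ≤ L / 2 * t (y - chart m q u) (y - chart m q u) := by
  have hs := apply_chart h.apply_min_ne_zero
  have htaylor := mul_rayleigh_sub_eq h.symm_a h.symm_m (h.apply_self_pos hs).ne'
    (h.apply_self_pos hy).ne'
  rw [h.rayleighDeriv_minimizer, h.rayleigh_minimizer, sub_zero, mul_zero, sub_zero] at htaylor
  calc rayleigh a m y - l₁ ≤ m y y * (rayleigh a m y - l₁) :=
        le_mul_of_one_le_left (sub_nonneg.2 (h.min_le_rayleigh hy)) (h.one_le_apply_self hy)
    _ ≤ _ := htaylor.trans_le (h.apply_self_sub_le (apply_sub_eq_zero hs hy) le_rfl)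

theorem rayleigh_gradient_step_le (h : PreconditionedPencil a m t u l₁ l₂ Λ q δ μ L)
    (hx : m q x = 1) {R : V} (hR : IsChartGradient a m t q x R) :
    rayleigh a m (x - (1 / L) • R) ≤ rayleigh a m x := by
  have hL := h.pos_upper
  have htR := h.nonneg_t R
  obtain ⟨w, hw⟩ : ∃ w, w = -(1 / L) • R := ⟨_, rfl⟩
  have hqw : m q w = 0 := by rw [hw, map_smul, hR.apply_eq_zero, smul_zero]
  have hy : m q (x + w) = 1 := by rw [map_add, hx, hqw, add_zero]
  have hD := h.one_le_apply_self hx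
  have hy0 := h.apply_self_pos hy
  have htaylor := mul_rayleigh_sub_eq h.symm_a h.symm_m (h.apply_self_pos hx).ne' hy0.ne'
  rw [add_sub_cancel_left] at htaylor
  have hderiv : rayleighDeriv a m x w = -(1 / L * t R R) := by
    rw [← hR.apply_eq w hqw, hw, map_smul, smul_eq_mul, neg_mul]
  have hquad : L / 2 * t w w = 1 / L * t R R / 2 := by
    rw [hw, map_smul, LinearMap.map_smul₂, smul_eq_mul, smul_eq_mul]
    field_simp
  have hnonneg : 0 ≤ 1 / L * t R R := by positivity
  rw [show x - (1 / L) • R = x + w by rw [hw]; module, ← sub_nonpos]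
  refine nonpos_of_mul_nonpos_right ?_ hy0
  rw [hderiv] at htaylor
  linarith [h.apply_self_sub_le hqw (h.min_le_rayleigh hx),
    mul_le_mul_of_nonneg_right hD hnonneg]

variable {τ ε : ℝ} {X Y Z R : V}

theorem rayleigh_extrapolation_le (h : PreconditionedPencil a m t u l₁ l₂ Λ q δ μ L)
    (hτ0 : 0 ≤ τ) (hτ1 : τ ≤ 1) (hX : m q X = 1) (hfX : rayleigh a m X ≤ l₁ + δ)
    (hY : m q Y = 1) (hYXZ : (1 + τ) • Y = X + τ • Z)
    (hE : energy t μ (chart m q u) (rayleigh a m X - l₁) Z ≤ 2 * ε)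
    (hε : 8 * (L / μ) * ε ≤ δ) : rayleigh a m Y ≤ l₁ + δ / 4 := by
  have hμ := h.pos_lower
  have hL := h.pos_upper
  have hYs := mul_apply_extrapolation_le_energy h.symm_t h.nonneg_t hμ.le hτ0 hτ1 hYXZ
    (h.strongly_convex_minimizer hX hfX)
  have : rayleigh a m Y - l₁ ≤ δ / 4 := by
    calc rayleigh a m Y - l₁ ≤ L / 2 * t (Y - chart m q u) (Y - chart m q u) :=
          h.rayleigh_sub_le hY
      _ = L / μ * (μ / 2 * t (Y - chart m q u) (Y - chart m q u)) := by field_simp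
      _ ≤ L / μ * (2 * ε) := mul_le_mul_of_nonneg_left (hYs.trans hE) (by positivity)
      _ ≤ δ / 4 := by linarith
  linarith

/-- As long as the energy is small, the extrapolated point stays in the region where the Rayleigh
quotient is strongly convex and smooth, so that Nesterov's energy estimate applies. -/
theorem energy_gradient_step_le (h : PreconditionedPencil a m t u l₁ l₂ Λ q δ μ L)
    (hτ0 : 0 ≤ τ) (hτ1 : τ ≤ 1) (hτL : τ ^ 2 * L ≤ μ) (hX : m q X = 1)
    (hfX : rayleigh a m X ≤ l₁ + δ) (hY : m q Y = 1) (hfY : rayleigh a m Y ≤ l₁ + δ / 4)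
    (hYXZ : (1 + τ) • Y = X + τ • Z) (hR : IsChartGradient a m t q Y R) :
    energy t μ (chart m q u) (rayleigh a m (Y - (1 / L) • R) - l₁)
        ((1 - τ) • Z + τ • Y - (τ / μ) • R) ≤
      (1 - τ) * energy t μ (chart m q u) (rayleigh a m X - l₁) Z := by
  have hL := h.pos_upper
  have hs := apply_chart h.apply_min_ne_zero
  refine energy_step_le h.symm_t h.nonneg_t h.pos_lower hL hτ0 hτ1 hτL
    (φY := rayleigh a m Y - l₁) hYXZ ?_ ?_ ?_
  · have hp : m q (Y - (1 / L) • R) = 1 := by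
      rw [map_sub, map_smul, hY, hR.apply_eq_zero, smul_zero, sub_zero]
    have hsmooth := h.smooth hY hp hfY
      ((h.rayleigh_gradient_step_le hY hR).trans (by linarith [h.shift_nonneg]))
    rw [← hR.apply_eq _ (apply_sub_eq_zero hY hp), sub_sub_cancel_left, ← neg_smul, map_smul,
      map_smul, LinearMap.map_smul₂] at hsmooth
    simp only [smul_eq_mul] at hsmooth
    have hquad : L / 2 * (-(1 / L) * (-(1 / L) * t R R)) = 1 / (2 * L) * t R R := by field_simp
    have hlin : 1 / L * t R R = 2 * (1 / (2 * L) * t R R) := by field_simp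
    linarith
  · rw [hR.apply_eq _ (apply_sub_eq_zero hY hs)]
    linarith [h.strongly_convex hY hs hfY (by linarith [h.rayleigh_minimizer, h.shift_nonneg]),
      h.rayleigh_minimizer]
  · rw [hR.apply_eq _ (apply_sub_eq_zero hY hX)]
    have := h.nonneg_t (X - Y)
    have := h.pos_lower
    have : 0 ≤ μ / 2 * t (X - Y) (X - Y) := by positivity
    linarith [h.strongly_convex hY hX hfY hfX]

end PreconditionedPencil

/-! ### Accelerated descent -/

/-- The accelerated gradient method in the chart `{x | m q x = 1}`: main iterates `X`, auxiliary
iterates `Z`, extrapolated points `Y` and gradients `R`. The next main iterate is only required to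
be at least as good as the gradient step with step size `1 / L`. -/
structure IsAcceleratedDescent {V : Type*} [AddCommGroup V] [Module ℝ V] (a m t : BilinForm ℝ V)
    (q : V) (μ L τ : ℝ) (X Z Y R : ℕ → V) : Prop where
  apply_main : ∀ k, m q (X k) = 1
  rayleigh_main_le : ∀ k, rayleigh a m (X k) ≤ rayleigh a m q
  aux_zero : Z 0 = X 0
  extrapolation : ∀ k, (1 + τ) • Y k = X k + τ • Z k
  gradient : ∀ k, IsChartGradient a m t q (Y k) (R k)
  aux_succ : ∀ k, Z (k + 1) = (1 - τ) • Z k + τ • Y k - (τ / μ) • R k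
  rayleigh_main_succ_le : ∀ k, rayleigh a m (Y k - (1 / L) • R k) ≤ rayleigh a m q →
    rayleigh a m (X (k + 1)) ≤ rayleigh a m (Y k - (1 / L) • R k)

namespace IsAcceleratedDescent

variable {V : Type*} [AddCommGroup V] [Module ℝ V] {a m t : BilinForm ℝ V} {u q : V}
  {l₁ l₂ Λ δ μ L τ : ℝ} {X Z Y R : ℕ → V}

theorem apply_extrapolation (hs : IsAcceleratedDescent a m t q μ L τ X Z Y R) (hτ0 : 0 ≤ τ) {k : ℕ}
    (hZ : m q (Z k) = 1) : m q (Y k) = 1 := by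
  have hτ : 1 + τ ≠ 0 := by positivity
  have := congrArg (m q) (hs.extrapolation k)
  rw [map_smul, map_add, map_smul, hs.apply_main, hZ, smul_eq_mul, smul_eq_mul, mul_one] at this
  exact mul_left_cancel₀ hτ (this.trans (mul_one _).symm)

theorem apply_aux (hs : IsAcceleratedDescent a m t q μ L τ X Z Y R) (hτ0 : 0 ≤ τ) (k : ℕ) :
    m q (Z k) = 1 := by
  induction k with
  | zero => rw [hs.aux_zero, hs.apply_main]
  | succ k ih =>
    simp only [hs.aux_succ, map_sub, map_add, map_smul, ih, hs.apply_extrapolation hτ0 ih,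
      (hs.gradient k).apply_eq_zero, smul_eq_mul]
    ring

theorem energy_le (hs : IsAcceleratedDescent a m t q μ L τ X Z Y R)
    (h : PreconditionedPencil a m t u l₁ l₂ Λ q δ μ L) (hτ0 : 0 ≤ τ)
    (hτL : τ ^ 2 * L ≤ μ) (hinit : 8 * (L / μ) * (rayleigh a m (X 0) - l₁) ≤ δ) (k : ℕ) :
    energy t μ (chart m q u) (rayleigh a m (X k) - l₁) (Z k) ≤
      2 * ((1 - τ) ^ k * (rayleigh a m (X 0) - l₁)) := by
  have hτ1 := h.le_one_of_sq_mul_le hτL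
  have hX0 := sub_nonneg.2 (h.min_le_rayleigh (hs.apply_main 0))
  have hmain k := (hs.rayleigh_main_le k).trans_eq h.rayleigh_anchor
  induction k with
  | zero =>
    have := h.strongly_convex_minimizer (hs.apply_main 0) (hmain 0)
    rw [energy, hs.aux_zero, pow_zero, one_mul]
    linarith
  | succ k ih =>
    have hY := hs.apply_extrapolation hτ0 (hs.apply_aux hτ0 k)
    have hfY : rayleigh a m (Y k) ≤ l₁ + δ / 4 := by
      refine h.rayleigh_extrapolation_le hτ0 hτ1 (hs.apply_main k) (hmain k) hY
        (hs.extrapolation k) (ih.trans ?_) hinit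
      gcongr
      exact mul_le_of_le_one_left hX0 (pow_le_one₀ (sub_nonneg.2 hτ1) (sub_le_self 1 hτ0))
    have hstep : rayleigh a m (X (k + 1)) ≤ rayleigh a m (Y k - (1 / L) • R k) := by
      refine hs.rayleigh_main_succ_le k ((h.rayleigh_gradient_step_le hY (hs.gradient k)).trans ?_)
      linarith [h.rayleigh_anchor, h.shift_nonneg]
    calc energy t μ (chart m q u) (rayleigh a m (X (k + 1)) - l₁) (Z (k + 1))
        ≤ energy t μ (chart m q u) (rayleigh a m (Y k - (1 / L) • R k) - l₁) (Z (k + 1)) := by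
          rw [energy, energy]
          gcongr
      _ ≤ (1 - τ) * energy t μ (chart m q u) (rayleigh a m (X k) - l₁) (Z k) := by
          rw [hs.aux_succ]
          exact h.energy_gradient_step_le hτ0 hτ1 hτL (hs.apply_main k) (hmain k) hY hfY
            (hs.extrapolation k) (hs.gradient k)
      _ ≤ (1 - τ) * (2 * ((1 - τ) ^ k * (rayleigh a m (X 0) - l₁))) :=
          mul_le_mul_of_nonneg_left ih (sub_nonneg.2 hτ1)
      _ = 2 * ((1 - τ) ^ (k + 1) * (rayleigh a m (X 0) - l₁)) := by ring

theorem rayleigh_sub_le (hs : IsAcceleratedDescent a m t q μ L τ X Z Y R)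
    (h : PreconditionedPencil a m t u l₁ l₂ Λ q δ μ L) (hτ0 : 0 ≤ τ)
    (hτL : τ ^ 2 * L ≤ μ) (hinit : 8 * (L / μ) * (rayleigh a m (X 0) - l₁) ≤ δ) (k : ℕ) :
    rayleigh a m (X k) - l₁ ≤ 2 * (1 - τ) ^ k * (rayleigh a m (X 0) - l₁) := by
  have := h.le_one_of_sq_mul_le hτL
  have hE := hs.energy_le h hτ0 hτL hinit k
  have := h.nonneg_t (Z k - chart m q u)
  have := h.pos_lower
  rw [energy, ← mul_assoc] at hE
  exact (le_add_of_nonneg_right (by positivity)).trans hE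

end IsAcceleratedDescent

/-- The EPIC iteration in homogeneous coordinates: main iterates `x`, auxiliary iterates `z`,
extrapolated points `y` and gradients `g`. Only the value of the Rayleigh quotient is prescribed for
the next main iterate. -/
structure IsEpic {V : Type*} [AddCommGroup V] [Module ℝ V] (a m t : BilinForm ℝ V)
    (q : V) (μ τ : ℝ) (x z y g : ℕ → V) : Prop where
  main_ne_zero : ∀ k, m q (x k) ≠ 0
  rayleigh_main_le : ∀ k, rayleigh a m (x k) ≤ rayleigh a m q
  aux_zero : z 0 = x 0
  extrapolation : ∀ k, y k = normalize m (chart m q (x k) + τ • chart m q (z k))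
  gradient : ∀ k, IsChartGradient a m t q (y k) (g k)
  aux_succ : ∀ k, z (k + 1) = normalize m
    ((1 - τ) • chart m q (z k) + τ • chart m q (y k) - (τ * m q (y k) / μ) • g k)
  rayleigh_main_succ_le : ∀ k, ∀ v ∈ Submodule.span ℝ {y k, g k}, m q v = 1 →
    rayleigh a m v ≤ rayleigh a m q → rayleigh a m (x (k + 1)) ≤ rayleigh a m v

namespace IsEpic

variable {V : Type*} [AddCommGroup V] [Module ℝ V] {a m t : BilinForm ℝ V} {q : V}
  {μ τ : ℝ} {x z y g : ℕ → V} {k : ℕ}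

theorem apply_chart_add (hs : IsEpic a m t q μ τ x z y g) (hz : m q (z k) ≠ 0) :
    m q (chart m q (x k) + τ • chart m q (z k)) = 1 + τ := by
  rw [map_add, map_smul, apply_chart (hs.main_ne_zero k), apply_chart hz, smul_eq_mul, mul_one]

theorem extrapolation_ne_zero (hs : IsEpic a m t q μ τ x z y g) (hm : m.IsSymm)
    (hm0 : ∀ x, 0 ≤ m x x) (hτ : 0 ≤ τ) (hz : m q (z k) ≠ 0) : m q (y k) ≠ 0 := by
  have hw : m q (chart m q (x k) + τ • chart m q (z k)) ≠ 0 := by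
    rw [hs.apply_chart_add hz]
    positivity
  rw [hs.extrapolation]
  exact apply_normalize_ne_zero (apply_self_pos_of_apply_ne_zero hm hm0 hw) hw

theorem smul_chart_extrapolation (hs : IsEpic a m t q μ τ x z y g) (hm : m.IsSymm)
    (hm0 : ∀ x, 0 ≤ m x x) (hτ : 0 ≤ τ) (hz : m q (z k) ≠ 0) :
    (1 + τ) • chart m q (y k) = chart m q (x k) + τ • chart m q (z k) := by
  have hw : m q (chart m q (x k) + τ • chart m q (z k)) ≠ 0 := by
    rw [hs.apply_chart_add hz]
    positivity
  rw [hs.extrapolation, chart_normalize (apply_self_pos_of_apply_ne_zero hm hm0 hw),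
    ← hs.apply_chart_add hz, apply_smul_chart hw]

theorem apply_aux_step (hs : IsEpic a m t q μ τ x z y g) (hm : m.IsSymm)
    (hm0 : ∀ x, 0 ≤ m x x) (hτ : 0 ≤ τ) (hz : m q (z k) ≠ 0) :
    m q ((1 - τ) • chart m q (z k) + τ • chart m q (y k) - (τ * m q (y k) / μ) • g k) = 1 := by
  simp only [map_sub, map_add, map_smul, apply_chart hz,
    apply_chart (hs.extrapolation_ne_zero hm hm0 hτ hz), (hs.gradient k).apply_eq_zero, smul_eq_mul]
  ring

theorem aux_ne_zero (hs : IsEpic a m t q μ τ x z y g) (hm : m.IsSymm)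
    (hm0 : ∀ x, 0 ≤ m x x) (hτ : 0 ≤ τ) (k : ℕ) : m q (z k) ≠ 0 := by
  induction k with
  | zero => exact hs.aux_zero ▸ hs.main_ne_zero 0
  | succ k ih =>
    have hw := (hs.apply_aux_step hm hm0 hτ ih).trans_ne one_ne_zero
    rw [hs.aux_succ]
    exact apply_normalize_ne_zero (apply_self_pos_of_apply_ne_zero hm hm0 hw) hw

theorem chart_aux_succ (hs : IsEpic a m t q μ τ x z y g) (hm : m.IsSymm)
    (hm0 : ∀ x, 0 ≤ m x x) (hτ : 0 ≤ τ) (k : ℕ) :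
    chart m q (z (k + 1)) =
      (1 - τ) • chart m q (z k) + τ • chart m q (y k) - (τ / μ) • m q (y k) • g k := by
  have hw := hs.apply_aux_step hm hm0 hτ (hs.aux_ne_zero hm hm0 hτ k)
  rw [hs.aux_succ, chart_normalize (apply_self_pos_of_apply_ne_zero hm hm0
    (hw.trans_ne one_ne_zero)), chart_of_apply_eq_one hw, smul_smul, div_mul_eq_mul_div]

theorem isAcceleratedDescent (hs : IsEpic a m t q μ τ x z y g) (hm : m.IsSymm)
    (hm0 : ∀ x, 0 ≤ m x x) (hτ : 0 ≤ τ) (L : ℝ) :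
    IsAcceleratedDescent a m t q μ L τ (fun k => chart m q (x k)) (fun k => chart m q (z k))
      (fun k => chart m q (y k)) (fun k => m q (y k) • g k) where
  apply_main k := apply_chart (hs.main_ne_zero k)
  rayleigh_main_le k := (rayleigh_chart (hs.main_ne_zero k)).trans_le (hs.rayleigh_main_le k)
  aux_zero := by rw [hs.aux_zero]
  extrapolation k := hs.smul_chart_extrapolation hm hm0 hτ (hs.aux_ne_zero hm hm0 hτ k)
  gradient k := (hs.gradient k).chart
    (hs.extrapolation_ne_zero hm hm0 hτ (hs.aux_ne_zero hm hm0 hτ k))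
  aux_succ := hs.chart_aux_succ hm hm0 hτ
  rayleigh_main_succ_le k hle := by
    have hy := hs.extrapolation_ne_zero hm hm0 hτ (hs.aux_ne_zero hm hm0 hτ k)
    rw [rayleigh_chart (hs.main_ne_zero (k + 1))]
    refine hs.rayleigh_main_succ_le k _ ?_ ?_ hle
    · have hyk : y k ∈ Submodule.span ℝ {y k, g k} := Submodule.subset_span (by simp)
      have hgk : g k ∈ Submodule.span ℝ {y k, g k} := Submodule.subset_span (by simp)
      exact sub_mem (Submodule.smul_mem _ _ hyk)
        (Submodule.smul_mem _ _ (Submodule.smul_mem _ _ hgk))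
    · rw [map_sub, map_smul, map_smul, apply_chart hy, (hs.gradient k).apply_eq_zero, smul_zero,
        smul_zero, sub_zero]

theorem rayleigh_sub_le {u : V} {l₁ l₂ Λ δ L : ℝ} (hs : IsEpic a m t q μ τ x z y g)
    (h : PreconditionedPencil a m t u l₁ l₂ Λ q δ μ L) (hτ0 : 0 ≤ τ)
    (hτL : τ ^ 2 * L ≤ μ) (hinit : 8 * (L / μ) * (rayleigh a m (x 0) - l₁) ≤ δ) (k : ℕ) :
    rayleigh a m (x k) - l₁ ≤ 2 * (1 - τ) ^ k * (rayleigh a m (x 0) - l₁) := by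
  have := (hs.isAcceleratedDescent h.symm_m h.nonneg_m hτ0 L).rayleigh_sub_le h hτ0 hτL
  simp only [rayleigh_chart (hs.main_ne_zero _)] at this
  exact this hinit k

end IsEpic

/-! ### The constants of the preconditioned pencil -/

section Constants

/-- The constant `χ_P` for the eigenvalue bounds `ξ₁ ≤ ξ₂` of the preconditioned pencil. -/
noncomputable def curvatureConst (l₁ l₂ ξ₁ ξ₂ : ℝ) : ℝ :=
  8 * l₂ / l₁ * (ξ₂ / ξ₁) * √((l₂ + l₁) / (2 * (l₂ - l₁)))

/-- The strong convexity parameter `μ_P`, where `δ` stands for `ρ_q - λ₁`. -/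
noncomputable def strongConvexityConst (l₁ l₂ ξ₁ ξ₂ δ : ℝ) : ℝ :=
  2 * ξ₁ * (1 - 4 * δ / (l₂ - l₁)) *
    (1 - l₁ / l₂ - (2 + curvatureConst l₁ l₂ ξ₁ ξ₂) * δ / l₂)

/-- The smoothness parameter `L_P`, where `δ` stands for `ρ_q - λ₁`. -/
noncomputable def smoothnessConst (l₁ l₂ Λ ξ₁ ξ₂ δ : ℝ) : ℝ :=
  2 * ξ₂ * (1 - l₁ / Λ + curvatureConst l₁ l₂ ξ₁ ξ₂ / l₂ * (ξ₁ / ξ₂) * δ)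

variable {l₁ l₂ Λ ξ₁ ξ₂ δ : ℝ}

theorem curvatureError_nonneg (hl₁ : 0 < l₁) (hδ : 0 ≤ δ) : 0 ≤ curvatureError l₁ l₂ δ := by
  rw [curvatureError]
  positivity

theorem curvatureConst_mul_div (hl₁ : 0 < l₁) (hl : l₁ < l₂) (δ : ℝ) :
    curvatureConst l₁ l₂ ξ₁ ξ₂ * δ / l₂ = ξ₂ / ξ₁ * curvatureError l₁ l₂ δ := by
  have := hl₁.trans hl
  rw [curvatureConst, curvatureError]
  field_simp

theorem curvatureError_le (hl₁ : 0 < l₁) (hl : l₁ < l₂) (hξ₁ : 0 < ξ₁) (hξ : ξ₁ ≤ ξ₂)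
    (hδ : 0 ≤ δ) : curvatureError l₁ l₂ δ ≤ curvatureConst l₁ l₂ ξ₁ ξ₂ * δ / l₂ := by
  rw [curvatureConst_mul_div hl₁ hl]
  exact le_mul_of_one_le_left (curvatureError_nonneg hl₁ hδ) ((one_le_div hξ₁).2 hξ)

theorem four_le_curvatureConst (hl₁ : 0 < l₁) (hl : l₁ < l₂) (hξ₁ : 0 < ξ₁) (hξ : ξ₁ ≤ ξ₂) :
    4 ≤ curvatureConst l₁ l₂ ξ₁ ξ₂ := by
  have := sub_pos.2 hl
  have hratio : 8 ≤ 8 * l₂ / l₁ := (le_div_iff₀ hl₁).2 (by linarith)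
  have hξξ : 1 ≤ ξ₂ / ξ₁ := (one_le_div hξ₁).2 hξ
  have hsqrt : 1 / 2 ≤ √((l₂ + l₁) / (2 * (l₂ - l₁))) := by
    refine Real.le_sqrt_of_sq_le ?_
    rw [le_div_iff₀ (by positivity)]
    linarith
  calc (4 : ℝ) = 8 * 1 * (1 / 2) := by norm_num
    _ ≤ curvatureConst l₁ l₂ ξ₁ ξ₂ := by
        rw [curvatureConst]
        gcongr

theorem mul_curvatureConst_le (hl₁ : 0 < l₁) (hl : l₁ < l₂) (hξ₁ : 0 < ξ₁) (hξ : ξ₁ ≤ ξ₂)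
    (hδ : δ ≤ (l₂ - l₁) / (2 + curvatureConst l₁ l₂ ξ₁ ξ₂)) :
    (2 + curvatureConst l₁ l₂ ξ₁ ξ₂) * δ ≤ l₂ - l₁ := by
  have := four_le_curvatureConst hl₁ hl hξ₁ hξ
  rwa [le_div_iff₀ (by linarith), mul_comm] at hδ

theorem six_mul_le (hl₁ : 0 < l₁) (hl : l₁ < l₂) (hξ₁ : 0 < ξ₁) (hξ : ξ₁ ≤ ξ₂) (hδ0 : 0 ≤ δ)
    (hδ : δ ≤ (l₂ - l₁) / (2 + curvatureConst l₁ l₂ ξ₁ ξ₂)) : 6 * δ ≤ l₂ - l₁ := by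
  have hχ := four_le_curvatureConst hl₁ hl hξ₁ hξ
  calc 6 * δ ≤ (2 + curvatureConst l₁ l₂ ξ₁ ξ₂) * δ :=
        mul_le_mul_of_nonneg_right (by linarith) hδ0
    _ ≤ l₂ - l₁ := mul_curvatureConst_le hl₁ hl hξ₁ hξ hδ

theorem curvature_lower_nonneg (hl₁ : 0 < l₁) (hl : l₁ < l₂) (hξ₁ : 0 < ξ₁) (hξ : ξ₁ ≤ ξ₂)
    (hδ0 : 0 ≤ δ) (hδ : δ ≤ (l₂ - l₁) / (2 + curvatureConst l₁ l₂ ξ₁ ξ₂)) :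
    0 ≤ 1 - l₁ / l₂ - 2 * δ / l₂ - curvatureError l₁ l₂ δ := by
  have hl₂ := hl₁.trans hl
  calc 0 ≤ (l₂ - l₁ - (2 + curvatureConst l₁ l₂ ξ₁ ξ₂) * δ) / l₂ :=
        div_nonneg (sub_nonneg.2 (mul_curvatureConst_le hl₁ hl hξ₁ hξ hδ)) hl₂.le
    _ = 1 - l₁ / l₂ - 2 * δ / l₂ - curvatureConst l₁ l₂ ξ₁ ξ₂ * δ / l₂ := by field_simp; ring
    _ ≤ _ := sub_le_sub_left (curvatureError_le hl₁ hl hξ₁ hξ hδ0) _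

theorem one_sub_div_gap_nonneg (hl : l₁ < l₂) (hδ : 6 * δ ≤ l₂ - l₁) :
    0 ≤ 1 - 4 * δ / (l₂ - l₁) :=
  sub_nonneg.2 ((div_le_one (sub_pos.2 hl)).2 (by linarith))

theorem strongConvexityConst_le (hl₁ : 0 < l₁) (hl : l₁ < l₂) (hξ₁ : 0 < ξ₁) (hξ : ξ₁ ≤ ξ₂)
    (hδ0 : 0 ≤ δ) (hδ : 6 * δ ≤ l₂ - l₁) :
    strongConvexityConst l₁ l₂ ξ₁ ξ₂ δ / 2 ≤ (1 - 4 * δ / (l₂ - l₁)) *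
      (1 - l₁ / l₂ - 2 * δ / l₂ - curvatureError l₁ l₂ δ) * ξ₁ := by
  have hσ := one_sub_div_gap_nonneg hl hδ
  calc strongConvexityConst l₁ l₂ ξ₁ ξ₂ δ / 2
      = (1 - 4 * δ / (l₂ - l₁)) *
          (1 - l₁ / l₂ - 2 * δ / l₂ - curvatureConst l₁ l₂ ξ₁ ξ₂ * δ / l₂) * ξ₁ := by
        rw [strongConvexityConst]
        ring
    _ ≤ _ := by
        gcongr
        exact curvatureError_le hl₁ hl hξ₁ hξ hδ0

theorem smoothnessConst_eq (hl₁ : 0 < l₁) (hl : l₁ < l₂) (hξ₁ : 0 < ξ₁) (hξ : ξ₁ ≤ ξ₂) :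
    smoothnessConst l₁ l₂ Λ ξ₁ ξ₂ δ / 2 = (1 - l₁ / Λ + curvatureError l₁ l₂ δ) * ξ₂ := by
  have hξ₂ := hξ₁.trans_le hξ
  have herror : curvatureConst l₁ l₂ ξ₁ ξ₂ / l₂ * (ξ₁ / ξ₂) * δ = curvatureError l₁ l₂ δ := by
    calc _ = curvatureConst l₁ l₂ ξ₁ ξ₂ * δ / l₂ * (ξ₁ / ξ₂) := by ring
      _ = _ := by
        rw [curvatureConst_mul_div hl₁ hl]
        field_simp
  rw [smoothnessConst, herror]
  ring

theorem strongConvexityConst_le_smoothnessConst (hl₁ : 0 < l₁) (hl : l₁ < l₂) (hΛ : l₂ ≤ Λ)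
    (hξ₁ : 0 < ξ₁) (hξ : ξ₁ ≤ ξ₂) (hδ0 : 0 ≤ δ)
    (hδ : δ ≤ (l₂ - l₁) / (2 + curvatureConst l₁ l₂ ξ₁ ξ₂)) :
    strongConvexityConst l₁ l₂ ξ₁ ξ₂ δ ≤ smoothnessConst l₁ l₂ Λ ξ₁ ξ₂ δ := by
  have hl₂ := hl₁.trans hl
  have h6 := six_mul_le hl₁ hl hξ₁ hξ hδ0 hδ
  have hlow := curvature_lower_nonneg hl₁ hl hξ₁ hξ hδ0 hδ
  have hσ : 1 - 4 * δ / (l₂ - l₁) ≤ 1 :=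
    sub_le_self 1 (div_nonneg (by positivity) (sub_nonneg.2 hl.le))
  have hcurv : 1 - l₁ / l₂ - 2 * δ / l₂ - curvatureError l₁ l₂ δ ≤
      1 - l₁ / Λ + curvatureError l₁ l₂ δ := by
    have : l₁ / Λ ≤ l₁ / l₂ := by gcongr
    have : 0 ≤ 2 * δ / l₂ := by positivity
    linarith [curvatureError_nonneg (l₂ := l₂) hl₁ hδ0]
  have hhalf : strongConvexityConst l₁ l₂ ξ₁ ξ₂ δ / 2 ≤ smoothnessConst l₁ l₂ Λ ξ₁ ξ₂ δ / 2 := by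
    calc strongConvexityConst l₁ l₂ ξ₁ ξ₂ δ / 2
        ≤ _ := strongConvexityConst_le hl₁ hl hξ₁ hξ hδ0 h6
      _ ≤ (1 - l₁ / Λ + curvatureError l₁ l₂ δ) * ξ₂ :=
        mul_le_mul ((mul_le_of_le_one_left hlow hσ).trans hcurv) hξ hξ₁.le (hlow.trans hcurv)
      _ = smoothnessConst l₁ l₂ Λ ξ₁ ξ₂ δ / 2 := (smoothnessConst_eq hl₁ hl hξ₁ hξ).symm
  linarith

theorem sq_mul_le_of_le_rpow {μ L τ : ℝ} (hμ : 0 < μ) (hL : 0 < L) (hτ0 : 0 ≤ τ)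
    (hτ : τ ≤ (L / μ) ^ (-(1 / 2) : ℝ)) : τ ^ 2 * L ≤ μ := by
  have hκ : 0 < L / μ := by positivity
  calc τ ^ 2 * L ≤ ((L / μ) ^ (-(1 / 2) : ℝ)) ^ 2 * L := by gcongr
    _ = μ := by
        rw [← Real.rpow_mul_natCast hκ.le]
        norm_num [Real.rpow_neg_one]
        field_simp

theorem mul_le_of_le_div_max {a b c d : ℝ} (ha : 0 ≤ a) (hb : 0 ≤ b) (h : a ≤ b / max c d) :
    c * a ≤ b := by
  rcases le_or_gt c 0 with hc | hc
  · exact (mul_nonpos_of_nonpos_of_nonneg hc ha).trans hb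
  · calc c * a ≤ max c d * a := mul_le_mul_of_nonneg_right (le_max_left c d) ha
      _ ≤ b := (le_div_iff₀' (lt_max_of_lt_left hc)).1 h

end Constants

section Pencil

variable {V : Type*} [AddCommGroup V] [Module ℝ V] {a m t : BilinForm ℝ V} {u q : V}
  {l₁ l₂ Λ : ℝ}

theorem GapPencil.preconditioned (h : GapPencil a m u l₁ l₂ Λ) (ht : t.IsSymm)
    (ht0 : ∀ x, 0 ≤ t x x) (hq : m q q = 1) {ξ₁ ξ₂ : ℝ} (hΛ : l₂ ≤ Λ) (hξ₁ : 0 < ξ₁) (hξ : ξ₁ ≤ ξ₂)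
    (hlower : ∀ w, m q w = 0 → ξ₁ * t w w ≤ a w w) (hupper : ∀ w, m q w = 0 → a w w ≤ ξ₂ * t w w)
    (hρ : rayleigh a m q ≤ l₁ + (l₂ - l₁) / (2 + curvatureConst l₁ l₂ ξ₁ ξ₂))
    (hμ : 0 < strongConvexityConst l₁ l₂ ξ₁ ξ₂ (rayleigh a m q - l₁)) :
    PreconditionedPencil a m t u l₁ l₂ Λ q (rayleigh a m q - l₁)
      (strongConvexityConst l₁ l₂ ξ₁ ξ₂ (rayleigh a m q - l₁))
      (smoothnessConst l₁ l₂ Λ ξ₁ ξ₂ (rayleigh a m q - l₁)) := by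
  have hl₁ := h.pos
  have hl := h.gap
  have haq : a q q = rayleigh a m q := by rw [rayleigh, hq, div_one]
  have hδ0 : 0 ≤ rayleigh a m q - l₁ := by
    have := h.min_mul_le q
    rw [hq, haq] at this
    linarith
  have hδ := sub_le_iff_le_add'.2 hρ
  have h6 := six_mul_le hl₁ hl hξ₁ hξ hδ0 hδ
  have hc := mul_nonneg (one_sub_div_gap_nonneg hl h6)
    (curvature_lower_nonneg hl₁ hl hξ₁ hξ hδ0 hδ)
  have hC : 0 ≤ 1 - l₁ / Λ + curvatureError l₁ l₂ (rayleigh a m q - l₁) := by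
    have := (div_le_one (hl₁.trans_le h.min_le_max)).2 h.min_le_max
    linarith [curvatureError_nonneg (l₂ := l₂) hl₁ hδ0]
  exact
    { h with
      unit_q := hq
      apply_q := by linarith
      small := h6
      symm_t := ht
      nonneg_t := ht0
      pos_lower := hμ
      lower_le_upper := strongConvexityConst_le_smoothnessConst hl₁ hl hΛ hξ₁ hξ hδ0 hδ
      lower := fun w hw => by
        calc _ ≤ _ := mul_le_mul_of_nonneg_right
              (strongConvexityConst_le hl₁ hl hξ₁ hξ hδ0 h6) (ht0 w)
          _ ≤ _ := by
            rw [mul_assoc]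
            exact mul_le_mul_of_nonneg_left (hlower w hw) hc
      upper := fun w hw => by
        rw [smoothnessConst_eq hl₁ hl hξ₁ hξ, mul_assoc]
        exact mul_le_mul_of_nonneg_left (hupper w hw) hC }

theorem apply_self_eq_sum {ι : Type*} [Fintype ι] [DecidableEq ι] (b : Module.Basis ι ℝ V)
    {c : BilinForm ℝ V} {d : ι → ℝ} (hc : ∀ i j, c (b i) (b j) = if i = j then d i else 0) (x : V) :
    c x x = ∑ i, d i * b.repr x i ^ 2 := by
  rw [← LinearMap.sum_repr_mul_repr_mul b b x x, Finsupp.sum_fintype _ _ (by simp)]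
  refine Finset.sum_congr rfl fun i _ => ?_
  rw [Finsupp.sum_fintype _ _ (by simp)]
  simp only [hc, smul_eq_mul, mul_ite, mul_zero, Finset.sum_ite_eq, Finset.mem_univ, if_true]
  ring

theorem gapPencil_of_eigenbasis {ι : Type*} [Finite ι] [DecidableEq ι] (b : Module.Basis ι ℝ V)
    (ha : a.IsSymm) (hm : m.IsSymm) {lam : ι → ℝ} {i₀ : ι}
    (horth : ∀ i j, m (b i) (b j) = if i = j then 1 else 0)
    (heig : ∀ i x, a (b i) x = lam i * m (b i) x) (hpos : 0 < lam i₀) (hgap : lam i₀ < l₂)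
    (hle : ∀ i ≠ i₀, l₂ ≤ lam i) (hΛ : ∀ i, lam i ≤ Λ) : GapPencil a m (b i₀) (lam i₀) l₂ Λ := by
  have := Fintype.ofFinite ι
  have hmsum x : m x x = ∑ i, b.repr x i ^ 2 := by
    simpa only [one_mul] using apply_self_eq_sum b (d := fun _ => 1) horth x
  have hasum x : a x x = ∑ i, lam i * b.repr x i ^ 2 :=
    apply_self_eq_sum b (fun i j => by rw [heig, horth, mul_ite, mul_one, mul_zero]) x
  have hrepr x : m (b i₀) x = b.repr x i₀ := by
    conv_lhs => rw [← b.sum_repr x]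
    simp only [map_sum, map_smul, horth, smul_eq_mul, mul_ite, mul_one, mul_zero,
      Finset.sum_ite_eq, Finset.mem_univ, if_true]
  refine ⟨ha, hm, fun x => ?_, hpos, hgap, by simp [horth], heig i₀, fun w hw => ?_, fun x => ?_⟩
  · rw [hmsum]
    positivity
  · rw [hmsum, hasum, Finset.mul_sum]
    refine Finset.sum_le_sum fun i _ => ?_
    rcases eq_or_ne i i₀ with rfl | hi
    · simp [← hrepr, hw]
    · exact mul_le_mul_of_nonneg_right (hle i hi) (sq_nonneg _)
  · rw [hmsum, hasum, Finset.mul_sum]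
    exact Finset.sum_le_sum fun i _ => mul_le_mul_of_nonneg_right (hΛ i) (sq_nonneg _)

end Pencil

/-! ### Matrix pencils -/

section Matrix

theorem isSymm_of_posDef {ι : Type*} {M : Matrix ι ι ℝ} (hM : M.PosDef) : M.IsSymm :=
  (conjTranspose_eq_transpose_of_trivial M).symm.trans hM.isHermitian

/-- The extended matrix `[q, Q]` has left inverse `[q, Q]ᵀ M`, which is therefore also a right
inverse. -/
theorem exists_mulVec_eq_of_orthogonal {ι κ : Type*} [Fintype ι] [Fintype κ] [DecidableEq κ]
    (hcard : Fintype.card ι = Fintype.card κ + 1) {M : Matrix ι ι ℝ} (hM : M.IsSymm)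
    {Q : Matrix ι κ ℝ} {q w : ι → ℝ} (hq : q ⬝ᵥ (M *ᵥ q) = 1) (hQ : Qᵀ * M * Q = 1)
    (hQq : (Qᵀ * M) *ᵥ q = 0) (hw : q ⬝ᵥ (M *ᵥ w) = 0) : ∃ v, Q *ᵥ v = w := by
  classical
  have hqQ : q ᵥ* M ᵥ* Q = 0 := by
    rw [vecMul_vecMul, ← hQq, ← vecMul_transpose, transpose_mul, transpose_transpose, hM.eq]
  have hleft : fromRows (replicateRow Unit (q ᵥ* M)) (Qᵀ * M) *
      fromCols (replicateCol Unit q) Q = 1 := by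
    rw [fromRows_mul_fromCols, hQ, ← fromBlocks_one, ← replicateCol_mulVec (Qᵀ * M) q, hQq,
      ← replicateRow_vecMul Q (q ᵥ* M), hqQ]
    congr 1
    ext
    rw [dotProduct_mulVec] at hq
    simpa [mul_apply, dotProduct] using hq
  have hright := (mul_eq_one_comm_of_card_eq _ _ _ (by simp [hcard, add_comm])).1 hleft
  rw [fromCols_mul_fromRows, ← vecMulVec_eq] at hright
  refine ⟨(Qᵀ * M) *ᵥ w, ?_⟩
  have := congrArg (· *ᵥ w) hright
  simpa [add_mulVec, vecMulVec_mulVec, ← dotProduct_mulVec, hw] using this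

variable {ι : Type*} [Fintype ι] [DecidableEq ι]

theorem isSymm_toBilin' {M : Matrix ι ι ℝ} (hM : M.PosDef) : (toBilin' M).IsSymm :=
  isSymm_toBilin'_iff_isSymm.2 (isSymm_of_posDef hM)

theorem toBilin'_self_nonneg {M : Matrix ι ι ℝ} (hM : M.PosDef) (x : ι → ℝ) :
    0 ≤ toBilin' M x x := by
  simpa [toBilin'_apply'] using hM.posSemidef.dotProduct_mulVec_nonneg x

theorem toBilin'_mulVec {κ : Type*} [Fintype κ] (A : Matrix ι ι ℝ)
    (Q : Matrix ι κ ℝ) (v w : κ → ℝ) :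
    toBilin' A (Q *ᵥ v) (Q *ᵥ w) = v ⬝ᵥ ((Qᵀ * A * Q) *ᵥ w) := by
  rw [toBilin'_apply', ← mulVec_mulVec, ← mulVec_mulVec, dotProduct_mulVec v, vecMul_transpose]

end Matrix

section PencilEigenvalues

variable {ι : Type*} [Fintype ι] {B P : Matrix ι ι ℝ} {ξ : ℝ}

/-- The eigenvalues of the pencil `(B, P)`. -/
def pencilEigenvalues (B P : Matrix ι ι ℝ) : Set ℝ :=
  {ξ | ∃ v : ι → ℝ, v ≠ 0 ∧ B *ᵥ v = ξ • (P *ᵥ v)}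

theorem pos_of_mem_pencilEigenvalues (hB : B.PosDef) (hP : P.PosDef)
    (hξ : ξ ∈ pencilEigenvalues B P) : 0 < ξ := by
  obtain ⟨v, hv0, hv⟩ := hξ
  have hBv := hB.dotProduct_mulVec_pos hv0
  rw [hv, dotProduct_smul, smul_eq_mul] at hBv
  exact pos_of_mul_pos_left hBv (hP.dotProduct_mulVec_pos hv0).le

theorem mulVec_eq_smul_of_forall_mul_dotProduct_le (hB : B.IsHermitian) (hP : P.IsHermitian) {c : ℝ}
    {v : ι → ℝ} (hv : v ⬝ᵥ (B *ᵥ v) = c * (v ⬝ᵥ (P *ᵥ v)))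
    (hc : ∀ w, c * (w ⬝ᵥ (P *ᵥ w)) ≤ w ⬝ᵥ (B *ᵥ w)) : B *ᵥ v = c • (P *ᵥ v) := by
  have hsub (w : ι → ℝ) : w ⬝ᵥ ((B - c • P) *ᵥ w) = w ⬝ᵥ (B *ᵥ w) - c * (w ⬝ᵥ (P *ᵥ w)) := by
    rw [sub_mulVec, smul_mulVec, dotProduct_sub, dotProduct_smul, smul_eq_mul]
  have hpsd : (B - c • P).PosSemidef :=
    PosSemidef.of_dotProduct_mulVec_nonneg (hB.sub (hP.smul (IsSelfAdjoint.all c))) fun w => by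
      rw [star_trivial, hsub]
      exact sub_nonneg.2 (hc w)
  have hker := (hpsd.dotProduct_mulVec_zero_iff v).1 (by rw [star_trivial, hsub, hv, sub_self])
  rwa [sub_mulVec, smul_mulVec, sub_eq_zero] at hker

variable [Nonempty ι]

theorem exists_forall_mul_dotProduct_le (B : Matrix ι ι ℝ) (hP : P.PosDef) :
    ∃ (c : ℝ) (v : ι → ℝ), v ≠ 0 ∧ v ⬝ᵥ (B *ᵥ v) = c * (v ⬝ᵥ (P *ᵥ v)) ∧
      ∀ w, c * (w ⬝ᵥ (P *ᵥ w)) ≤ w ⬝ᵥ (B *ᵥ w) := by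
  have hP0 {v : ι → ℝ} (hv : v ≠ 0) : 0 < v ⬝ᵥ (P *ᵥ v) := by
    simpa using hP.dotProduct_mulVec_pos hv
  have hne {v : ι → ℝ} (hv : v ∈ Metric.sphere (0 : ι → ℝ) 1) : v ≠ 0 :=
    ne_zero_of_mem_unit_sphere ⟨v, hv⟩
  have hcont : ContinuousOn (fun v : ι → ℝ => (v ⬝ᵥ (B *ᵥ v)) / (v ⬝ᵥ (P *ᵥ v)))
      (Metric.sphere 0 1) :=
    ContinuousOn.div (by fun_prop) (by fun_prop) fun v hv => (hP0 (hne hv)).ne'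
  obtain ⟨v, hv, hmin⟩ := (isCompact_sphere (0 : ι → ℝ) 1).exists_isMinOn
    (NormedSpace.sphere_nonempty.2 zero_le_one) hcont
  refine ⟨_, v, hne hv, (div_mul_cancel₀ _ (hP0 (hne hv)).ne').symm, fun w => ?_⟩
  rcases eq_or_ne w 0 with rfl | hw
  · simp
  have hnorm : ‖w‖⁻¹ ≠ 0 := inv_ne_zero (norm_ne_zero_iff.2 hw)
  have hwmem : ‖w‖⁻¹ • w ∈ Metric.sphere (0 : ι → ℝ) 1 := by
    simp [norm_smul, norm_ne_zero_iff.2 hw]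
  rw [← le_div_iff₀ (hP0 hw)]
  refine (hmin hwmem).trans_eq ?_
  simp only [mulVec_smul, smul_dotProduct, dotProduct_smul, smul_eq_mul]
  rw [mul_div_mul_left _ _ hnorm, mul_div_mul_left _ _ hnorm]

theorem mul_dotProduct_le_of_mem_lowerBounds (hB : B.IsHermitian) (hP : P.PosDef)
    (hξ : ξ ∈ lowerBounds (pencilEigenvalues B P)) (w : ι → ℝ) :
    ξ * (w ⬝ᵥ (P *ᵥ w)) ≤ w ⬝ᵥ (B *ᵥ w) := by
  obtain ⟨c, v, hv0, hv, hc⟩ := exists_forall_mul_dotProduct_le B hP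
  have hw : 0 ≤ w ⬝ᵥ (P *ᵥ w) := by simpa using hP.posSemidef.dotProduct_mulVec_nonneg w
  have hξc : ξ ≤ c :=
    hξ ⟨v, hv0, mulVec_eq_smul_of_forall_mul_dotProduct_le hB hP.isHermitian hv hc⟩
  exact (mul_le_mul_of_nonneg_right hξc hw).trans (hc w)

theorem dotProduct_le_mul_of_mem_upperBounds (hB : B.IsHermitian) (hP : P.PosDef)
    (hξ : ξ ∈ upperBounds (pencilEigenvalues B P)) (w : ι → ℝ) :
    w ⬝ᵥ (B *ᵥ w) ≤ ξ * (w ⬝ᵥ (P *ᵥ w)) := by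
  have hneg : -ξ ∈ lowerBounds (pencilEigenvalues (-B) P) := by
    rintro c ⟨v, hv0, hv⟩
    exact neg_le.1 (hξ ⟨v, hv0, by rw [neg_smul, ← hv, neg_mulVec, neg_neg]⟩)
  have := mul_dotProduct_le_of_mem_lowerBounds hB.neg hP hneg w
  rwa [neg_mulVec, dotProduct_neg, neg_mul, neg_le_neg_iff] at this

end PencilEigenvalues

section Preconditioner

variable {ι : Type*} [Fintype ι] [DecidableEq ι] {A M T : Matrix ι ι ℝ} {q : ι → ℝ}

/-- The projection `Π`, `T`-orthogonal, onto `{w | q ⬝ᵥ (M *ᵥ w) = 0}`. -/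
noncomputable def orthogonalProjector (M T : Matrix ι ι ℝ) (q : ι → ℝ) : Matrix ι ι ℝ :=
  1 - (q ⬝ᵥ (M *ᵥ (T⁻¹ *ᵥ (M *ᵥ q))))⁻¹ • vecMulVec (T⁻¹ *ᵥ (M *ᵥ q)) (q ᵥ* M)

theorem orthogonalProjector_mulVec (M T : Matrix ι ι ℝ) (q v : ι → ℝ) :
    orthogonalProjector M T q *ᵥ v =
      v - ((q ⬝ᵥ (M *ᵥ (T⁻¹ *ᵥ (M *ᵥ q))))⁻¹ * (q ⬝ᵥ (M *ᵥ v))) • T⁻¹ *ᵥ (M *ᵥ q) := by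
  rw [orthogonalProjector, sub_mulVec, one_mulVec, smul_mulVec, vecMulVec_mulVec,
    ← dotProduct_mulVec, op_smul_eq_smul, smul_smul]

theorem mulVec_inv_mulVec (hT : T.PosDef) (v : ι → ℝ) : T *ᵥ (T⁻¹ *ᵥ v) = v := by
  rw [mulVec_mulVec, mul_nonsing_inv _ ((isUnit_iff_isUnit_det T).1 hT.isUnit), one_mulVec]

theorem dotProduct_orthogonalProjector (hM : M.IsSymm) (hT : T.PosDef) (hq : M *ᵥ q ≠ 0)
    (v : ι → ℝ) : q ⬝ᵥ (M *ᵥ (orthogonalProjector M T q *ᵥ v)) = 0 := by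
  have hpos : 0 < q ⬝ᵥ (M *ᵥ (T⁻¹ *ᵥ (M *ᵥ q))) := by
    have hqM : q ᵥ* M = M *ᵥ q := by rw [← mulVec_transpose, hM.eq]
    rw [dotProduct_mulVec, hqM]
    simpa using hT.inv.dotProduct_mulVec_pos hq
  rw [orthogonalProjector_mulVec, mulVec_sub, mulVec_smul, dotProduct_sub, dotProduct_smul,
    smul_eq_mul, mul_right_comm, inv_mul_cancel₀ hpos.ne', one_mul, sub_self]

theorem dotProduct_mulVec_orthogonalProjector (hM : M.IsSymm) (hT : T.PosDef) (v : ι → ℝ)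
    {w : ι → ℝ} (hw : q ⬝ᵥ (M *ᵥ w) = 0) :
    w ⬝ᵥ (T *ᵥ (orthogonalProjector M T q *ᵥ v)) = w ⬝ᵥ (T *ᵥ v) := by
  have hwq : w ⬝ᵥ (M *ᵥ q) = 0 := by
    rw [dotProduct_mulVec, ← mulVec_transpose, hM.eq, dotProduct_comm, hw]
  rw [orthogonalProjector_mulVec, mulVec_sub, mulVec_smul, mulVec_inv_mulVec hT, dotProduct_sub,
    dotProduct_smul, hwq, smul_zero, sub_zero]

end Preconditioner

section Matrix

variable {n : ℕ} {A M T : Matrix (Fin n) (Fin n) ℝ} {q : Fin n → ℝ}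

theorem toBilin'_self_pos {M : Matrix (Fin n) (Fin n) ℝ} (hM : M.PosDef) {v : Fin n → ℝ}
    (hv : v ≠ 0) : 0 < toBilin' M v v := by
  simpa [toBilin'_apply'] using hM.dotProduct_mulVec_pos hv

theorem toBilin'_comm {M : Matrix (Fin n) (Fin n) ℝ} (hM : M.PosDef) (v w : Fin n → ℝ) :
    toBilin' M v w = toBilin' M w v :=
  (isSymm_toBilin' hM).eq v w

theorem Rq_eq_rayleigh (A M : Matrix (Fin n) (Fin n) ℝ) (x : Fin n → ℝ) :
    Rq A M x = rayleigh (toBilin' A) (toBilin' M) x := by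
  simp only [Rq, rayleigh, toBilin'_apply']

theorem Mnormalize_eq_normalize (M : Matrix (Fin n) (Fin n) ℝ) (x : Fin n → ℝ) :
    Mnormalize M x = normalize (toBilin' M) x := by
  simp only [Mnormalize, Mnorm, normalize, toBilin'_apply']

theorem chart_toBilin' (M : Matrix (Fin n) (Fin n) ℝ) (q x : Fin n → ℝ) :
    chart (toBilin' M) q x = (q ⬝ᵥ (M *ᵥ x))⁻¹ • x := by
  rw [chart, toBilin'_apply']

theorem Mnormalize_mem_Xset (hM : M.PosDef) {v : Fin n → ℝ} (hv : 0 < q ⬝ᵥ (M *ᵥ v))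
    (hle : Rq A M v ≤ Rq A M q) : Mnormalize M v ∈ Xset A M q := by
  have hqv : toBilin' M q v ≠ 0 := by rw [toBilin'_apply']; exact hv.ne'
  have hvv := apply_self_pos_of_apply_ne_zero (isSymm_toBilin' hM) (toBilin'_self_nonneg hM) hqv
  rw [Mnormalize_eq_normalize]
  refine ⟨⟨?_, ?_⟩, ?_⟩
  · rw [Mnorm, ← toBilin'_apply', apply_normalize_self hvv, Real.sqrt_one]
  · rw [normalize, mulVec_smul, dotProduct_smul, smul_eq_mul]
    have := Real.sqrt_pos.2 hvv
    positivity
  · rwa [Rq_eq_rayleigh, rayleigh_normalize hvv, ← Rq_eq_rayleigh]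

theorem Rq_Mnormalize (hM : M.PosDef) (v : Fin n → ℝ) : Rq A M (Mnormalize M v) = Rq A M v := by
  rcases eq_or_ne v 0 with rfl | hv
  · rw [Mnormalize, smul_zero]
  · rw [Mnormalize_eq_normalize, Rq_eq_rayleigh, Rq_eq_rayleigh,
      rayleigh_normalize (toBilin'_self_pos hM hv)]

theorem isChartGradient_Mnormalize (hA : A.PosDef) (hM : M.PosDef) (hT : T.PosDef)
    (hq : M *ᵥ q ≠ 0) (v : Fin n → ℝ) {y : Fin n → ℝ} (hy : y = Mnormalize M v) :
    IsChartGradient (toBilin' A) (toBilin' M) (toBilin' T) q y (orthogonalProjector M T q *ᵥ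
      (T⁻¹ *ᵥ ((2 : ℝ) • (A *ᵥ y - Rq A M y • (M *ᵥ y))))) where
  apply_eq_zero := by
    rw [toBilin'_apply']
    exact dotProduct_orthogonalProjector (isSymm_of_posDef hM) hT hq _
  apply_eq w hw := by
    have hres (c : ℝ) : w ⬝ᵥ ((2 : ℝ) • (A *ᵥ y - c • (M *ᵥ y))) =
        2 * (toBilin' A y w - c * toBilin' M y w) := by
      rw [toBilin'_comm hA y w, toBilin'_comm hM y w, dotProduct_smul, dotProduct_sub,
        dotProduct_smul, smul_eq_mul, smul_eq_mul, toBilin'_apply', toBilin'_apply']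
    rw [toBilin'_comm hT, toBilin'_apply',
      dotProduct_mulVec_orthogonalProjector (isSymm_of_posDef hM) hT _
        (by rwa [← toBilin'_apply']), mulVec_inv_mulVec hT, hres, Rq_eq_rayleigh, rayleighDeriv]
    rcases eq_or_ne v 0 with rfl | hv
    · simp [hy, Mnormalize]
    · rw [hy, Mnormalize_eq_normalize, apply_normalize_self (toBilin'_self_pos hM hv), div_one]

theorem linearIndependent_of_orthonormal {u : Fin n → Fin n → ℝ}
    (horth : ∀ i j, u i ⬝ᵥ (M *ᵥ u j) = if i = j then (1 : ℝ) else 0) : LinearIndependent ℝ u := by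
  refine LinearMap.linearIndependent_of_isOrthoᵢ (B := toBilin' M) (fun i j hij => ?_) fun i => ?_
  · simp [Function.onFun, toBilin'_apply', horth, hij]
  · simp [toBilin'_apply', horth]

end Matrix

theorem gapPencil_toBilin' {n : ℕ} {A M : Matrix (Fin (n + 2)) (Fin (n + 2)) ℝ} (hA : A.PosDef)
    (hM : M.PosDef) {lam : Fin (n + 2) → ℝ} {u : Fin (n + 2) → Fin (n + 2) → ℝ}
    (hlam0 : 0 < lam 0) (hlam01 : lam 0 < lam 1) (hmono : Monotone lam)
    (heig : ∀ i, A *ᵥ u i = lam i • (M *ᵥ u i))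
    (horth : ∀ i j, u i ⬝ᵥ (M *ᵥ u j) = if i = j then (1 : ℝ) else 0) :
    GapPencil (toBilin' A) (toBilin' M) (u 0) (lam 0) (lam 1) (lam (Fin.last (n + 1))) := by
  let b := basisOfLinearIndependentOfCardEqFinrank (linearIndependent_of_orthonormal horth)
    (Module.finrank_fintype_fun_eq_card ℝ).symm
  have hb (i) : b i = u i := by
    simp only [b, coe_basisOfLinearIndependentOfCardEqFinrank]
  have heig' (i x) : toBilin' A (u i) x = lam i * toBilin' M (u i) x := by
    rw [toBilin'_comm hA, toBilin'_comm hM, toBilin'_apply', toBilin'_apply', heig, dotProduct_smul,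
      smul_eq_mul]
  have := gapPencil_of_eigenbasis b (i₀ := 0) (lam := lam) (l₂ := lam 1) (isSymm_toBilin' hA)
    (isSymm_toBilin' hM) (by simpa only [hb, toBilin'_apply'] using horth)
    (by simpa only [hb] using heig') hlam0 hlam01
    (fun i hi => hmono (Fin.one_le_of_ne_zero hi)) fun i => hmono (Fin.le_last i)
  rwa [hb] at this

section Restriction

variable {ι κ : Type*} [Fintype ι] [DecidableEq κ] {A M T : Matrix ι ι ℝ} {q : ι → ℝ}
  {Q : Matrix ι κ ℝ}

theorem posDef_transpose_mul_mul [Finite κ] (hQ : Qᵀ * M * Q = 1) (hT : T.PosDef) :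
    (Qᵀ * T * Q).PosDef := by
  have := Fintype.ofFinite κ
  rw [← conjTranspose_eq_transpose_of_trivial]
  refine hT.conjTranspose_mul_mul_same fun v w hvw => ?_
  simpa only [mulVec_mulVec, hQ, one_mulVec] using congrArg ((Qᵀ * M) *ᵥ ·) hvw

variable [Fintype κ] [DecidableEq ι] [Nonempty κ]

theorem apply_self_mem_Icc_of_orthogonal (hcard : Fintype.card ι = Fintype.card κ + 1)
    (hA : A.PosDef) (hM : M.IsSymm) (hT : T.PosDef) (hq : q ⬝ᵥ (M *ᵥ q) = 1) (hQ : Qᵀ * M * Q = 1)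
    (hQq : (Qᵀ * M) *ᵥ q = 0) {ξ₁ ξ₂ : ℝ}
    (hξ₁ : ξ₁ ∈ lowerBounds (pencilEigenvalues (Qᵀ * A * Q) (Qᵀ * T * Q)))
    (hξ₂ : ξ₂ ∈ upperBounds (pencilEigenvalues (Qᵀ * A * Q) (Qᵀ * T * Q)))
    {w : ι → ℝ} (hw : q ⬝ᵥ (M *ᵥ w) = 0) :
    toBilin' A w w ∈ Set.Icc (ξ₁ * toBilin' T w w) (ξ₂ * toBilin' T w w) := by
  obtain ⟨v, rfl⟩ := exists_mulVec_eq_of_orthogonal hcard hM hq hQ hQq hw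
  have hB := (posDef_transpose_mul_mul hQ hA).isHermitian
  have hP := posDef_transpose_mul_mul hQ hT
  rw [toBilin'_mulVec, toBilin'_mulVec]
  exact ⟨mul_dotProduct_le_of_mem_lowerBounds hB hP hξ₁ v,
    dotProduct_le_mul_of_mem_upperBounds hB hP hξ₂ v⟩

theorem preconditionedPencil_toBilin' (hcard : Fintype.card ι = Fintype.card κ + 1) (hA : A.PosDef)
    (hT : T.PosDef) (hq : q ⬝ᵥ (M *ᵥ q) = 1) (hQ : Qᵀ * M * Q = 1) (hQq : (Qᵀ * M) *ᵥ q = 0)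
    {u : ι → ℝ} {l₁ l₂ Λ : ℝ} (h : GapPencil (toBilin' A) (toBilin' M) u l₁ l₂ Λ) (hΛ : l₂ ≤ Λ)
    {ξ₁ ξ₂ : ℝ} (hξ₁ : IsLeast (pencilEigenvalues (Qᵀ * A * Q) (Qᵀ * T * Q)) ξ₁)
    (hξ₂ : IsGreatest (pencilEigenvalues (Qᵀ * A * Q) (Qᵀ * T * Q)) ξ₂) {ρ : ℝ}
    (hρ : ρ = rayleigh (toBilin' A) (toBilin' M) q)
    (hρle : ρ ≤ l₁ + (l₂ - l₁) / (2 + curvatureConst l₁ l₂ ξ₁ ξ₂))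
    (hμ : 0 < strongConvexityConst l₁ l₂ ξ₁ ξ₂ (ρ - l₁)) :
    PreconditionedPencil (toBilin' A) (toBilin' M) (toBilin' T) u l₁ l₂ Λ q (ρ - l₁)
      (strongConvexityConst l₁ l₂ ξ₁ ξ₂ (ρ - l₁)) (smoothnessConst l₁ l₂ Λ ξ₁ ξ₂ (ρ - l₁)) := by
  subst hρ
  have hpos : 0 < ξ₁ := pos_of_mem_pencilEigenvalues (posDef_transpose_mul_mul hQ hA)
    (posDef_transpose_mul_mul hQ hT) hξ₁.1
  have hbounds (w) (hw : toBilin' M q w = 0) := apply_self_mem_Icc_of_orthogonal hcard hA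
    (isSymm_toBilin'_iff_isSymm.1 h.symm_m) hT hq hQ hQq hξ₁.2 hξ₂.2
    (by rwa [← toBilin'_apply'] : q ⬝ᵥ (M *ᵥ w) = 0)
  exact h.preconditioned (isSymm_toBilin' hT) (toBilin'_self_nonneg hT) (by rwa [toBilin'_apply'])
    hΛ hpos (hξ₁.2 hξ₂.1) (fun w hw => (hbounds w hw).1) (fun w hw => (hbounds w hw).2) hρle hμ

end Restriction

theorem isEpic_toBilin' {n : ℕ} {A M T : Matrix (Fin n) (Fin n) ℝ} (hA : A.PosDef)
    (hM : M.PosDef) (hT : T.PosDef) {q : Fin n → ℝ} (hq : M *ᵥ q ≠ 0) {μ τ : ℝ}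
    {x z y r g : ℕ → Fin n → ℝ} (hx : ∀ k, x k ∈ Xset A M q) (hz0 : z 0 = x 0)
    (hy : ∀ k, y k = Mnormalize M
      ((q ⬝ᵥ (M *ᵥ x k))⁻¹ • x k + (τ * (q ⬝ᵥ (M *ᵥ z k))⁻¹) • z k))
    (hr : ∀ k, r k = (2 : ℝ) • (A *ᵥ y k - Rq A M (y k) • (M *ᵥ y k)))
    (hg : ∀ k, g k = orthogonalProjector M T q *ᵥ (T⁻¹ *ᵥ r k))
    (hz : ∀ k, z (k + 1) = Mnormalize M (((1 - τ) * (q ⬝ᵥ (M *ᵥ z k))⁻¹) • z k +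
      (τ * (q ⬝ᵥ (M *ᵥ y k))⁻¹) • y k - (τ * (q ⬝ᵥ (M *ᵥ y k)) / μ) • g k))
    (hmin : ∀ k, ∀ v ∈ Xset A M q ∩ (Submodule.span ℝ {y k, g k} : Submodule ℝ (Fin n → ℝ)),
      Rq A M (x (k + 1)) ≤ Rq A M v) :
    IsEpic (toBilin' A) (toBilin' M) (toBilin' T) q μ τ x z y g where
  main_ne_zero k := by
    rw [toBilin'_apply']
    exact (hx k).1.2.ne'
  rayleigh_main_le k := by
    simp only [← Rq_eq_rayleigh]
    exact (hx k).2
  aux_zero := hz0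
  extrapolation k := by
    rw [hy, Mnormalize_eq_normalize, chart_toBilin', chart_toBilin', smul_smul]
  gradient k := by
    rw [hg, hr]
    exact isChartGradient_Mnormalize hA hM hT hq _ (hy k)
  aux_succ k := by
    rw [hz, Mnormalize_eq_normalize, chart_toBilin', chart_toBilin', toBilin'_apply', smul_smul,
      smul_smul]
  rayleigh_main_succ_le k v hv hqv hle := by
    rw [toBilin'_apply'] at hqv
    simp only [← Rq_eq_rayleigh] at hle ⊢
    rw [← Rq_Mnormalize hM v]
    exact hmin k _ ⟨Mnormalize_mem_Xset hM (hqv ▸ one_pos) hle, Submodule.smul_mem _ _ hv⟩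

end Epic

open Epic

theorem stmt_19_general (n : ℕ)
    (A M T : Matrix (Fin (n + 2)) (Fin (n + 2)) ℝ)
    (hA : A.PosDef) (hM : M.PosDef) (hT : T.PosDef)
    (q : Fin (n + 2) → ℝ) (Q : Matrix (Fin (n + 2)) (Fin (n + 1)) ℝ)
    (hq1 : q ⬝ᵥ (M *ᵥ q) = 1)
    (hQMQ : Qᵀ * M * Q = 1)
    (hQMq : (Qᵀ * M) *ᵥ q = 0)
    (lam : Fin (n + 2) → ℝ) (u : Fin (n + 2) → Fin (n + 2) → ℝ)
    (hlam0 : 0 < lam 0) (hlam01 : lam 0 < lam 1) (hmono : Monotone lam)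
    (heig : ∀ i, A *ᵥ u i = lam i • (M *ᵥ u i))
    (horth : ∀ i j, u i ⬝ᵥ (M *ᵥ u j) = if i = j then (1 : ℝ) else 0)
    (B : Matrix (Fin (n + 1)) (Fin (n + 1)) ℝ) (hB : B = Qᵀ * A * Q)
    (P : Matrix (Fin (n + 1)) (Fin (n + 1)) ℝ) (hP : P = Qᵀ * T * Q)
    (ρq : ℝ) (hρq : ρq = Rq A M q)
    (ximin ximax : ℝ)
    (hximin : IsLeast {ξ : ℝ | ∃ v : Fin (n + 1) → ℝ, v ≠ 0 ∧ B *ᵥ v = ξ • (P *ᵥ v)} ximin)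
    (hximax : IsGreatest {ξ : ℝ | ∃ v : Fin (n + 1) → ℝ, v ≠ 0 ∧ B *ᵥ v = ξ • (P *ᵥ v)} ximax)
    (χP : ℝ)
    (hχP : χP = (8 * lam 1 / lam 0) * (ximax / ximin) *
      Real.sqrt ((lam 1 + lam 0) / (2 * (lam 1 - lam 0))))
    (μP LP : ℝ)
    (hμP : μP = 2 * ximin * (1 - 4 * (ρq - lam 0) / (lam 1 - lam 0)) *
      (1 - lam 0 / lam 1 - (2 + χP) * (ρq - lam 0) / lam 1))
    (hLP : LP = 2 * ximax * (1 - lam 0 / lam (Fin.last (n + 1)) +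
      (χP / lam 1) * (ximin / ximax) * (ρq - lam 0)))
    (hμpos : 0 < μP)
    (κP : ℝ) (hκP : κP = LP / μP)
    (τP : ℝ) (hτ0 : 0 < τP) (hτ : τP ≤ κP ^ (-(1 / 2 : ℝ)))
    (hρ : ρq ≤ lam 0 + (lam 1 - lam 0) / (2 + χP))
    (qt : Fin (n + 2) → ℝ) (hqt : qt = T⁻¹ *ᵥ (M *ᵥ q))
    (Pi : Matrix (Fin (n + 2)) (Fin (n + 2)) ℝ)
    (hPi : Pi = 1 - (q ⬝ᵥ (M *ᵥ qt))⁻¹ • vecMulVec qt (q ᵥ* M))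
    (x z xbar r rt : ℕ → (Fin (n + 2) → ℝ))
    (hx0 : x 0 ∈ Xset A M q)
    (hinit : 8 * κP * (Rq A M (x 0) - lam 0) ≤ ρq - lam 0)
    (hz0 : z 0 = x 0)
    (hxbar : ∀ k, xbar k = Mnormalize M
      ((q ⬝ᵥ (M *ᵥ x k))⁻¹ • x k + (τP * (q ⬝ᵥ (M *ᵥ z k))⁻¹) • z k))
    (hr : ∀ k, r k = (2 : ℝ) • (A *ᵥ xbar k - Rq A M (xbar k) • (M *ᵥ xbar k)))
    (hrt : ∀ k, rt k = Pi *ᵥ (T⁻¹ *ᵥ r k))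
    (hz : ∀ k, z (k + 1) = Mnormalize M
      (((1 - τP) * (q ⬝ᵥ (M *ᵥ z k))⁻¹) • z k +
        (τP * (q ⬝ᵥ (M *ᵥ xbar k))⁻¹) • xbar k -
        (τP * (q ⬝ᵥ (M *ᵥ xbar k)) / μP) • rt k))
    (hxmin : ∀ k, x (k + 1) ∈ Xset A M q ∧
      ∀ v ∈ Xset A M q ∩
        (Submodule.span ℝ {x k, xbar k, rt k} : Submodule ℝ (Fin (n + 2) → ℝ)),
        Rq A M (x (k + 1)) ≤ Rq A M v) :
    (∀ k, Rq A M (x (k + 1)) ≤ Rq A M (x k)) ∧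
    ∀ k : ℕ, Rq A M (x k) - lam 0 ≤ 2 * (1 - τP) ^ k * (Rq A M (x 0) - lam 0) := by
  subst hB hP hρq hqt hκP
  obtain rfl : χP = curvatureConst (lam 0) (lam 1) ximin ximax := hχP
  obtain rfl : μP = strongConvexityConst (lam 0) (lam 1) ximin ximax (Rq A M q - lam 0) := hμP
  obtain rfl : LP = smoothnessConst (lam 0) (lam 1) (lam (Fin.last (n + 1))) ximin ximax
    (Rq A M q - lam 0) := hLP
  obtain rfl : Pi = orthogonalProjector M T q := hPi
  have hx (k) : x k ∈ Xset A M q := by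
    cases k with
    | zero => exact hx0
    | succ k => exact (hxmin k).1
  have hpencil := preconditionedPencil_toBilin' (by simp) hA hT hq1 hQMQ hQMq
    (gapPencil_toBilin' hA hM hlam0 hlam01 hmono heig horth) (hmono (Fin.le_last 1)) hximin hximax
    (Rq_eq_rayleigh A M q) hρ hμpos
  have hMq : M *ᵥ q ≠ 0 := fun h0 => by simp [h0] at hq1
  have hepic := isEpic_toBilin' hA hM hT hMq hx hz0 hxbar hr hrt hz fun k v hv =>
    (hxmin k).2 v ⟨hv.1, Submodule.span_mono (Set.subset_insert _ _) hv.2⟩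
  have hτL := sq_mul_le_of_le_rpow hμpos hpencil.pos_upper hτ0.le hτ
  rw [Rq_eq_rayleigh A M (x 0)] at hinit
  refine ⟨fun k => (hxmin k).2 _ ⟨hx k, Submodule.subset_span (by simp)⟩, ?_⟩
  simpa only [← Rq_eq_rayleigh] using hepic.rayleigh_sub_le hpencil hτ0.le hτL hinit

/-- Convergence of EPIC: with T SPD, P = QᵀTQ, μ_P, L_P from the convexity
theorem, κ_P = L_P/μ_P, 0 < τ_P ≤ κ_P^{−1/2}, ρ_q in the admissible range and a
sufficiently good initial vector x₀ ∈ X with z₀ = x₀, the EPIC iterates satisfy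
monotone decline of the Rayleigh quotient and
Rq(x_k) − λ₁ ≤ 2(1−τ_P)^k (Rq(x₀) − λ₁). -/
theorem stmt_19 (n : ℕ)
    (A M T : Matrix (Fin (n+2)) (Fin (n+2)) ℝ)
    (hA : A.PosDef) (hM : M.PosDef) (hT : T.PosDef)
    (q : Fin (n+2) → ℝ) (Q : Matrix (Fin (n+2)) (Fin (n+1)) ℝ)
    (hq1 : q ⬝ᵥ (M *ᵥ q) = 1)
    (hQMQ : Qᵀ * M * Q = 1)
    (hQMq : (Qᵀ * M) *ᵥ q = 0)
    (lam : Fin (n+2) → ℝ) (u : Fin (n+2) → Fin (n+2) → ℝ)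
    (hlam0 : 0 < lam 0) (hlam01 : lam 0 < lam 1) (hmono : Monotone lam)
    (heig : ∀ i, A *ᵥ u i = lam i • (M *ᵥ u i))
    (horth : ∀ i j, u i ⬝ᵥ (M *ᵥ u j) = if i = j then (1:ℝ) else 0)
    (hqu1 : 0 < q ⬝ᵥ (M *ᵥ u 0))
    (B : Matrix (Fin (n+1)) (Fin (n+1)) ℝ) (hB : B = Qᵀ * A * Q)
    (P : Matrix (Fin (n+1)) (Fin (n+1)) ℝ) (hP : P = Qᵀ * T * Q)
    (ρq : ℝ) (hρq : ρq = Rq A M q)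
    (ximin ximax : ℝ)
    (hximin : IsLeast {ξ : ℝ | ∃ v : Fin (n+1) → ℝ, v ≠ 0 ∧ B *ᵥ v = ξ • (P *ᵥ v)} ximin)
    (hximax : IsGreatest {ξ : ℝ | ∃ v : Fin (n+1) → ℝ, v ≠ 0 ∧ B *ᵥ v = ξ • (P *ᵥ v)} ximax)
    (χP : ℝ)
    (hχP : χP = (8 * lam 1 / lam 0) * (ximax / ximin) *
      Real.sqrt ((lam 1 + lam 0) / (2 * (lam 1 - lam 0))))
    (μP LP : ℝ)
    (hμP : μP = 2 * ximin * (1 - 4 * (ρq - lam 0) / (lam 1 - lam 0)) *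
      (1 - lam 0 / lam 1 - (2 + χP) * (ρq - lam 0) / lam 1))
    (hLP : LP = 2 * ximax * (1 - lam 0 / lam (Fin.last (n+1)) +
      (χP / lam 1) * (ximin / ximax) * (ρq - lam 0)))
    (hμpos : 0 < μP)
    (κP : ℝ) (hκP : κP = LP / μP)
    (τP : ℝ) (hτ0 : 0 < τP) (hτ : τP ≤ κP ^ (-(1/2 : ℝ)))
    (hρ1 : lam 0 ≤ ρq) (hρ2 : ρq ≤ lam 0 + (lam 1 - lam 0) / (2 + χP))
    (qt : Fin (n+2) → ℝ) (hqt : qt = T⁻¹ *ᵥ (M *ᵥ q))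
    (Pi : Matrix (Fin (n+2)) (Fin (n+2)) ℝ)
    (hPi : Pi = 1 - (q ⬝ᵥ (M *ᵥ qt))⁻¹ • vecMulVec qt (q ᵥ* M))
    (x z xbar r rt : ℕ → (Fin (n+2) → ℝ))
    (hx0 : x 0 ∈ Xset A M q)
    (hinit1 : 0 ≤ Rq A M (x 0) - lam 0)
    (hinit2 : Rq A M (x 0) - lam 0 ≤
      (ρq - lam 0) / max (8 * κP) (2 * κP * (1 + τP * κP) ^ 2))
    (hz0 : z 0 = x 0)
    (hxbar : ∀ k, xbar k = Mnormalize M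
      ((q ⬝ᵥ (M *ᵥ x k))⁻¹ • x k + (τP * (q ⬝ᵥ (M *ᵥ z k))⁻¹) • z k))
    (hr : ∀ k, r k = (2 : ℝ) • (A *ᵥ xbar k - Rq A M (xbar k) • (M *ᵥ xbar k)))
    (hrt : ∀ k, rt k = Pi *ᵥ (T⁻¹ *ᵥ r k))
    (hz : ∀ k, z (k+1) = Mnormalize M
      (((1 - τP) * (q ⬝ᵥ (M *ᵥ z k))⁻¹) • z k +
        (τP * (q ⬝ᵥ (M *ᵥ xbar k))⁻¹) • xbar k -
        (τP * (q ⬝ᵥ (M *ᵥ xbar k)) / μP) • rt k))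
    (hxmin : ∀ k,
      x (k+1) ∈ Xset A M q ∩
        (Submodule.span ℝ {q, x k, xbar k, rt k} :
          Submodule ℝ (Fin (n+2) → ℝ)) ∧
      ∀ v ∈ Xset A M q ∩
        (Submodule.span ℝ {q, x k, xbar k, rt k} :
          Submodule ℝ (Fin (n+2) → ℝ)),
        Rq A M (x (k+1)) ≤ Rq A M v) :
    (∀ k, Rq A M (x (k+1)) ≤ Rq A M (x k)) ∧
    ∀ k : ℕ, Rq A M (x k) - lam 0 ≤ 2 * (1 - τP) ^ k * (Rq A M (x 0) - lam 0) :=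
  stmt_19_general n A M T hA hM hT q Q hq1 hQMQ hQMq lam u hlam0 hlam01 hmono heig horth B hB P hP
    ρq hρq ximin ximax hximin hximax χP hχP μP LP hμP hLP hμpos κP hκP τP hτ0 hτ hρ2 qt hqt Pi hPi
    x z xbar r rt hx0 (mul_le_of_le_div_max hinit1 (sub_nonneg.2 hρ1) hinit2) hz0 hxbar hr hrt hz
    fun k => ⟨(hxmin k).1.1, fun v hv =>
      (hxmin k).2 v ⟨hv.1, Submodule.span_mono (Set.subset_insert _ _) hv.2⟩⟩
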